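/- arXiv:2201.13424 — 3 statements merged into one kernel-verified Lean document; each statement's English description precedes it below -/
import Mathlib

section
/- There exists a constant C > 0 such that for all real N ≥ 10^1000: the number of d ∈ 𝒟(N) whose number ω(d) of distinct prime factors satisfies |ω(d) − (1/2)·log log N| ≥ (log log N)^{2/3} is at most C·|𝒟(N)| / (log log N)^{1/100}. -/
/-- `𝒟`: squarefree positive integers all of whose prime divisors are `≡ 1, 2 (mod 4)`. -/
def PellD : Set ℕ :=
  {d | Squarefree d ∧ 0 < d ∧ ∀ p : ℕ, p.Prime → p ∣ d → p % 4 = 1 ∨ p % 4 = 2}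

open Finset ArithmeticFunction

namespace PellAux

lemma abel_range (a b : ℕ → ℝ) (B : ℝ) (ha : ∀ i, a (i+1) ≤ a i) (ha0 : ∀ i, 0 ≤ a i)
    (hb : ∀ n, |∑ i ∈ range n, b i| ≤ B) (n : ℕ) :
    |∑ i ∈ range n, a i * b i| ≤ B * a 0 := by
  have key : ∀ n, |∑ i ∈ range n, a i * b i - a n * ∑ i ∈ range n, b i| ≤ B * (a 0 - a n) := by
    intro n
    induction n with
    | zero => simp
    | succ n ih =>
      have h1 : ∑ i ∈ range (n+1), a i * b i - a (n+1) * ∑ i ∈ range (n+1), b i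
          = (∑ i ∈ range n, a i * b i - a n * ∑ i ∈ range n, b i)
            + (a n - a (n+1)) * ∑ i ∈ range (n+1), b i := by
        rw [sum_range_succ, sum_range_succ]; ring
      rw [h1]
      refine (abs_add_le _ _).trans ?_
      rw [abs_mul, abs_of_nonneg (sub_nonneg.2 (ha n))]
      have := mul_le_mul_of_nonneg_left (hb (n+1)) (sub_nonneg.2 (ha n))
      nlinarith
  have h2 : ∑ i ∈ range n, a i * b i = (∑ i ∈ range n, a i * b i - a n * ∑ i ∈ range n, b i)
      + a n * ∑ i ∈ range n, b i := by ring
  rw [h2]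
  refine (abs_add_le _ _).trans ?_
  rw [abs_mul, abs_of_nonneg (ha0 n)]
  have := mul_le_mul_of_nonneg_left (hb n) (ha0 n)
  have := key n
  nlinarith

lemma sum_Ioc_shift (f : ℕ → ℝ) (M n : ℕ) :
    ∑ k ∈ Ioc M (M + n), f k = ∑ i ∈ range n, f (i + (M + 1)) := by
  induction n with
  | zero => simp
  | succ n ih =>
    rw [← add_assoc, sum_Ioc_succ_top (by omega), ih, sum_range_succ]
    congr 2; ring

lemma abel_Ioc (a b : ℕ → ℝ) (B : ℝ) (M K : ℕ) (hMK : M ≤ K)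
    (ha : ∀ i, M < i → a (i+1) ≤ a i) (ha0 : ∀ i, M < i → 0 ≤ a i)
    (hb : ∀ k, M ≤ k → |∑ i ∈ Ioc M k, b i| ≤ B) :
    |∑ i ∈ Ioc M K, a i * b i| ≤ B * a (M+1) := by
  obtain ⟨n, rfl⟩ := Nat.exists_eq_add_of_le hMK
  rw [sum_Ioc_shift]
  have := abel_range (fun i => a (i + (M+1))) (fun i => b (i + (M+1))) B
    (fun i => by have := ha (i + (M+1)) (by omega); rwa [show i + 1 + (M+1) = i + (M+1) + 1 by ring])
    (fun i => ha0 _ (by omega)) (fun n => by rw [← sum_Ioc_shift]; exact hb _ (by omega)) n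
  simpa using this

/-- the nontrivial real character mod 4 -/
noncomputable def chi (n : ℕ) : ℝ := ((ZMod.χ₄ (n : ZMod 4) : ℤ) : ℝ)

lemma chi_eq (n : ℕ) : chi n = if n % 4 = 1 then 1 else if n % 4 = 3 then -1 else 0 := by
  unfold chi
  rw [ZMod.χ₄_nat_eq_if_mod_four]
  split_ifs <;> first | omega | simp

lemma chi_mul (a b : ℕ) : chi (a * b) = chi a * chi b := by
  unfold chi; push_cast; rw [map_mul]; push_cast; rfl

lemma abs_chi_le (n : ℕ) : |chi n| ≤ 1 := by
  rw [chi_eq]; split_ifs <;> simp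

lemma chi_partial (M : ℕ) : ∑ i ∈ Ioc 0 M, chi i = if M % 4 = 1 ∨ M % 4 = 2 then 1 else 0 := by
  induction M with
  | zero => simp
  | succ n ih =>
    rw [sum_Ioc_succ_top (by omega), ih, chi_eq]
    have : n % 4 < 4 := Nat.mod_lt _ (by norm_num)
    split_ifs <;> first | omega | norm_num

lemma sum_Ioc_sub (f : ℕ → ℝ) {M K : ℕ} (h : M ≤ K) :
    ∑ i ∈ Ioc M K, f i = ∑ i ∈ Ioc 0 K, f i - ∑ i ∈ Ioc 0 M, f i := by
  rw [eq_sub_iff_add_eq, add_comm, sum_Ioc_consecutive f (Nat.zero_le M) h]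

lemma chi_partial_bound (M K : ℕ) (h : M ≤ K) : |∑ i ∈ Ioc M K, chi i| ≤ 1 := by
  rw [sum_Ioc_sub _ h, chi_partial, chi_partial]
  split_ifs <;> norm_num

lemma hyperbola (h : ℕ → ℝ) (hm : ∀ a b, h (a*b) = h a * h b) (N : ℕ) :
    ∑ n ∈ Ioc 0 N, h n * Real.log n =
      ∑ d ∈ Ioc 0 N, h d * vonMangoldt d * ∑ m ∈ Ioc 0 (N / d), h m := by
  let f : ArithmeticFunction ℝ := ⟨fun n => h n * vonMangoldt n, by simp⟩
  let g : ArithmeticFunction ℝ := ⟨fun n => if n = 0 then 0 else h n, by simp⟩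
  have := ArithmeticFunction.sum_Ioc_mul_eq_sum_sum f g N
  have e1 : ∑ n ∈ Ioc 0 N, (f * g) n = ∑ n ∈ Ioc 0 N, h n * Real.log n := by
    apply sum_congr rfl
    intro n hn
    rw [mul_apply, ← vonMangoldt_sum,
      ← Nat.sum_divisorsAntidiagonal (n := n) (fun i _ => vonMangoldt i), mul_sum]
    apply sum_congr rfl
    intro x hx
    have hx' := Nat.mem_divisorsAntidiagonal.1 hx
    have : x.2 ≠ 0 := by rintro h0; simp [h0] at hx'; omega
    change (h x.1 * vonMangoldt x.1) * (if x.2 = 0 then 0 else h x.2) = _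
    rw [if_neg this, ← hx'.1, hm]; ring
  rw [← e1, this]
  apply sum_congr rfl
  intro d _
  change h d * vonMangoldt d * _ = _
  congr 1
  apply sum_congr rfl
  intro m hm
  change (if m = 0 then 0 else h m) = _
  rw [if_neg (by simp at hm; omega)]

lemma psi_bound (N : ℕ) : ∑ n ∈ Ioc 0 N, vonMangoldt n ≤ 6 * N := by
  have := Chebyshev.psi_le_const_mul_self (x := N) (by positivity)
  rw [Chebyshev.psi, Nat.floor_natCast] at this
  refine this.trans ?_
  have h4 : Real.log 4 ≤ 2 := by
    rw [show (4:ℝ) = 2^2 by norm_num, Real.log_pow]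
    have := Real.log_two_lt_d9; push_cast; linarith
  gcongr; linarith

lemma sum_log_eq (N : ℕ) : ∑ n ∈ Ioc 0 N, Real.log n = Real.log N.factorial := by
  induction N with
  | zero => simp
  | succ n ih =>
    rw [sum_Ioc_succ_top (by omega), ih, Nat.factorial_succ]
    push_cast
    rw [Real.log_mul (by positivity) (by positivity)]; ring

lemma mertens_one (N : ℕ) (hN : 1 ≤ N) :
    |∑ n ∈ Ioc 0 N, vonMangoldt n / n - Real.log N| ≤ 6 := by
  have h := hyperbola (fun _ => 1) (by simp) N
  simp only [one_mul, sum_const, Nat.card_Ioc, tsub_zero, nsmul_eq_mul, mul_one] at h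
  rw [sum_log_eq] at h
  have hN0 : (0:ℝ) < N := by exact_mod_cast hN
  have hN1 : (1:ℝ) ≤ N := by exact_mod_cast hN
  have hl := Stirling.le_log_factorial_stirling (n := N) (by omega)
  have hpi : 0 ≤ Real.log (2 * Real.pi) := Real.log_nonneg (by have := Real.pi_gt_three; linarith)
  have hlogN := Real.log_nonneg hN1
  have hu : Real.log N.factorial ≤ N * Real.log N := by
    rw [← Real.log_pow]
    apply Real.log_le_log (by positivity)
    exact_mod_cast Nat.factorial_le_pow N
  have hS : N * ∑ n ∈ Ioc 0 N, vonMangoldt n / n = ∑ n ∈ Ioc 0 N, vonMangoldt n * (N / n : ℝ) := by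
    rw [mul_sum]; apply sum_congr rfl; intros; ring
  have h1 : ∑ n ∈ Ioc 0 N, vonMangoldt n * ((N / n : ℕ):ℝ) ≤ ∑ n ∈ Ioc 0 N, vonMangoldt n * (N / n : ℝ) := by
    apply sum_le_sum; intro n _
    exact mul_le_mul_of_nonneg_left Nat.cast_div_le vonMangoldt_nonneg
  have h2 : ∑ n ∈ Ioc 0 N, vonMangoldt n * (N / n : ℝ) ≤
      ∑ n ∈ Ioc 0 N, vonMangoldt n * ((N / n : ℕ):ℝ) + ∑ n ∈ Ioc 0 N, vonMangoldt n := by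
    rw [← sum_add_distrib]
    apply sum_le_sum; intro n hn
    rw [← mul_add_one]
    apply mul_le_mul_of_nonneg_left _ vonMangoldt_nonneg
    rw [← Nat.floor_div_eq_div (K := ℝ)]
    exact (Nat.lt_floor_add_one _).le
  have h3 := psi_bound N
  rw [abs_le]
  constructor
  · have : N * (∑ n ∈ Ioc 0 N, vonMangoldt n / n - Real.log N) ≥ N * (-6) := by
      rw [mul_sub, hS]; nlinarith
    exact le_of_mul_le_mul_left this hN0
  · have : N * (∑ n ∈ Ioc 0 N, vonMangoldt n / n - Real.log N) ≤ N * 6 := by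
      rw [mul_sub, hS]; nlinarith
    exact le_of_mul_le_mul_left this hN0

lemma T_cauchy (M K : ℕ) (h : M ≤ K) :
    |∑ i ∈ Ioc 0 K, chi i / i - ∑ i ∈ Ioc 0 M, chi i / i| ≤ 1 / (M + 1 : ℝ) := by
  rw [← sum_Ioc_sub _ h]
  have := abel_Ioc (fun i => 1 / (i:ℝ)) chi 1 M K h
    (fun i hi => by
      have : (0:ℝ) < i := by exact_mod_cast (by omega : 0 < i)
      apply one_div_le_one_div_of_le this; push_cast; linarith)
    (fun i _ => by positivity) (fun k hk => chi_partial_bound M k hk)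
  convert this using 2
  · apply sum_congr rfl; intros; ring
  · push_cast; ring

lemma L_exists : ∃ l : ℝ, 1/3 ≤ l ∧ ∀ M : ℕ,
    |∑ i ∈ Ioc 0 M, chi i / i - l| ≤ 1 / (M + 1 : ℝ) := by
  have hc : CauchySeq (fun M : ℕ => ∑ i ∈ Ioc 0 M, chi i / (i:ℝ)) := by
    apply cauchySeq_of_le_tendsto_0 (fun N : ℕ => 2 * (1 / ((N:ℝ) + 1)))
    · intro n m N hn hm
      refine (dist_triangle_right _ _ (∑ i ∈ Ioc 0 N, chi i / (i:ℝ))).trans ?_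
      rw [Real.dist_eq, Real.dist_eq]
      have := T_cauchy N n hn
      have := T_cauchy N m hm
      linarith
    · have := (tendsto_one_div_add_atTop_nhds_zero_nat (𝕜 := ℝ)).const_mul 2
      simpa using this
  obtain ⟨l, hl⟩ := cauchySeq_tendsto_of_complete hc
  have key : ∀ M : ℕ, |∑ i ∈ Ioc 0 M, chi i / i - l| ≤ 1 / (M + 1 : ℝ) := by
    intro M
    have : Filter.Tendsto (fun K : ℕ => |∑ i ∈ Ioc 0 K, chi i / (i:ℝ) - ∑ i ∈ Ioc 0 M, chi i / (i:ℝ)|)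
      Filter.atTop (nhds |l - ∑ i ∈ Ioc 0 M, chi i / (i:ℝ)|) := (hl.sub_const _).abs
    rw [abs_sub_comm]
    apply le_of_tendsto this
    filter_upwards [Filter.eventually_ge_atTop M] with K hK
    exact T_cauchy M K hK
  refine ⟨l, ?_, key⟩
  have := key 3
  have e : ∑ i ∈ Ioc 0 3, chi i / (i:ℝ) = 2/3 := by
    rw [show Ioc 0 3 = {1,2,3} by decide]
    simp [chi_eq]; norm_num
  rw [e, abs_le] at this
  norm_num at this
  linarith [this.2]

lemma chi_log_bound (N : ℕ) : |∑ n ∈ Ioc 0 N, chi n / n * Real.log n| ≤ 1 := by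
  rcases Nat.lt_or_ge N 2 with h | h
  · interval_cases N
    · simp
    · simp
  have e : ∑ n ∈ Ioc 0 N, chi n / n * Real.log n = ∑ n ∈ Ioc 2 N, (Real.log n / n) * chi n := by
    rw [← sum_Ioc_consecutive _ (Nat.zero_le 2) h, show Ioc 0 2 = {1,2} by decide]
    simp only [mem_singleton, OfNat.one_ne_ofNat, not_false_eq_true, sum_insert, sum_singleton]
    rw [chi_eq 2]; simp
    apply sum_congr rfl; intros; ring
  rw [e]
  have := abel_Ioc (fun i => Real.log i / i) chi 1 2 N h
    (fun i hi => by
      have h3 : (3:ℝ) ≤ i := by exact_mod_cast hi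
      have he := Real.exp_one_lt_d9
      apply Real.log_div_self_antitoneOn
      · simp; linarith
      · simp; linarith
      · simp)
    (fun i _ => by positivity) (fun k hk => chi_partial_bound 2 k hk)
  refine this.trans ?_
  rw [one_mul, div_le_one (by positivity)]
  exact (Real.log_le_self (by positivity))

lemma mertens_chi (N : ℕ) (hN : 1 ≤ N) :
    |∑ n ∈ Ioc 0 N, chi n * vonMangoldt n / n| ≤ 21 := by
  obtain ⟨l, hl, hT⟩ := L_exists
  have h := hyperbola (fun n => chi n / n) (fun a b => by
    simp only [chi_mul]; push_cast; rw [mul_div_mul_comm]) N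
  have hN0 : (0:ℝ) < N := by exact_mod_cast hN
  have hb := chi_log_bound N
  have e : ∑ d ∈ Ioc 0 N, chi d / d * vonMangoldt d * ∑ m ∈ Ioc 0 (N / d), chi m / m
      = l * ∑ n ∈ Ioc 0 N, chi n * vonMangoldt n / n
      + ∑ d ∈ Ioc 0 N, chi d / d * vonMangoldt d * (∑ m ∈ Ioc 0 (N / d), chi m / m - l) := by
    rw [mul_sum, ← sum_add_distrib]
    apply sum_congr rfl; intros; ring
  have herr : |∑ d ∈ Ioc 0 N, chi d / d * vonMangoldt d * (∑ m ∈ Ioc 0 (N / d), chi m / m - l)| ≤ 6 := by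
    refine (abs_sum_le_sum_abs _ _).trans ?_
    have : ∑ d ∈ Ioc 0 N, vonMangoldt d / N ≤ 6 := by
      rw [← sum_div, div_le_iff₀ hN0]; exact psi_bound N
    refine le_trans (sum_le_sum fun d hd => ?_) this
    have hd0 : (0:ℝ) < d := by exact_mod_cast (mem_Ioc.1 hd).1
    have hT' := hT (N / d)
    have hfl : (N:ℝ)/d ≤ ((N / d : ℕ):ℝ) + 1 := by
      rw [← Nat.floor_div_eq_div (K := ℝ)]
      exact (Nat.lt_floor_add_one _).le
    have h2 : 1 / (((N / d : ℕ):ℝ) + 1) ≤ d / N := by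
      rw [← one_div_div (N:ℝ) d]
      apply one_div_le_one_div_of_le (by positivity) hfl
    rw [abs_mul, abs_mul, abs_div, abs_of_nonneg (vonMangoldt_nonneg), abs_of_pos hd0]
    calc |chi d| / d * vonMangoldt d * |∑ m ∈ Ioc 0 (N / d), chi m / m - l|
        ≤ 1 / d * vonMangoldt d * (d / N) := by
          have := vonMangoldt_nonneg (n := d)
          have := abs_chi_le d
          gcongr
          exact hT'.trans h2
      _ = vonMangoldt d / N := by field_simp
  rw [h, e] at hb
  set S := ∑ n ∈ Ioc 0 N, chi n * vonMangoldt n / n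
  rw [abs_le] at *
  constructor
  · by_contra hc
    push Not at hc
    nlinarith
  · by_contra hc
    push Not at hc
    nlinarith

lemma nonprime_bound : ∃ C : ℝ, 0 ≤ C ∧ ∀ N : ℕ,
    ∑ n ∈ Ioc 0 N, (if n.Prime then 0 else vonMangoldt n) / (n:ℝ) ≤ C := by
  have hs := ArithmeticFunction.vonMangoldt.summable_residueClass_non_primes_div (0 : ZMod 1)
  have e : (fun n : ℕ => (if n.Prime then 0 else ArithmeticFunction.vonMangoldt.residueClass (0 : ZMod 1) n) / (n:ℝ))
    = fun n : ℕ => (if n.Prime then 0 else vonMangoldt n) / (n:ℝ) := by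
    ext n
    have : ArithmeticFunction.vonMangoldt.residueClass (0 : ZMod 1) n = vonMangoldt n := by
      unfold ArithmeticFunction.vonMangoldt.residueClass
      rw [Set.indicator_of_mem]
      exact Subsingleton.elim _ _
    rw [this]
  rw [e] at hs
  have h0 : ∀ n : ℕ, 0 ≤ (if n.Prime then 0 else vonMangoldt n) / (n:ℝ) := by
    intro n
    have := vonMangoldt_nonneg (n := n)
    split_ifs <;> positivity
  exact ⟨_, tsum_nonneg h0, fun N => hs.sum_le_tsum _ (fun i _ => h0 i)⟩

/-- weight -/
noncomputable def wt (e : ℝ) (n : ℕ) : ℝ := if n.Prime then (1 + e * chi n) / 2 * Real.log n else 0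

lemma wt_nonneg (e : ℝ) (he : |e| ≤ 1) (n : ℕ) : 0 ≤ wt e n := by
  unfold wt
  split_ifs
  · have h1 : |e * chi n| ≤ 1 := by
      rw [abs_mul]; exact mul_le_one₀ he (abs_nonneg _) (abs_chi_le n)
    have := (abs_le.1 h1).1
    have : 0 ≤ 1 + e * chi n := by linarith
    positivity
  · exact le_rfl

lemma mertens_wt : ∃ C : ℝ, 0 < C ∧ ∀ e : ℝ, |e| ≤ 1 → ∀ N : ℕ, 1 ≤ N →
    |∑ n ∈ Ioc 0 N, wt e n / n - 1/2 * Real.log N| ≤ C := by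
  obtain ⟨C, hC0, hC⟩ := nonprime_bound
  refine ⟨C + 14, by linarith, fun e he N hN => ?_⟩
  have h1 := mertens_one N hN
  have h2 := mertens_chi N hN
  have hd : ∑ n ∈ Ioc 0 N, wt e n / n = 1/2 * ∑ n ∈ Ioc 0 N, vonMangoldt n / n
      + e / 2 * ∑ n ∈ Ioc 0 N, chi n * vonMangoldt n / n
      - ∑ n ∈ Ioc 0 N, (1 + e * chi n) / 2 * ((if n.Prime then 0 else vonMangoldt n) / (n:ℝ)) := by
    rw [mul_sum, mul_sum, ← sum_add_distrib, ← sum_sub_distrib]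
    apply sum_congr rfl
    intro n _
    unfold wt
    split_ifs with hp
    · rw [vonMangoldt_apply_prime hp]; ring
    · ring
  have h3 : |∑ n ∈ Ioc 0 N, (1 + e * chi n) / 2 * ((if n.Prime then 0 else vonMangoldt n) / (n:ℝ))| ≤ C := by
    refine (abs_sum_le_sum_abs _ _).trans (le_trans (sum_le_sum fun n _ => ?_) (hC N))
    have h0 : 0 ≤ (if n.Prime then 0 else vonMangoldt n) / (n:ℝ) := by
      have := vonMangoldt_nonneg (n := n)
      split_ifs <;> positivity
    rw [abs_mul, abs_of_nonneg h0]
    apply mul_le_of_le_one_left h0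
    have h1 : |e * chi n| ≤ 1 := by
      rw [abs_mul]; exact mul_le_one₀ he (abs_nonneg _) (abs_chi_le n)
    rw [abs_le] at *
    constructor <;> linarith
  have h4 : |e / 2 * ∑ n ∈ Ioc 0 N, chi n * vonMangoldt n / n| ≤ 11 := by
    rw [abs_mul, abs_div, abs_two]
    nlinarith [abs_nonneg (∑ n ∈ Ioc 0 N, chi n * vonMangoldt n / n), abs_nonneg e]
  rw [hd]
  rw [abs_le] at *
  constructor <;> linarith

lemma sum_inv_nlog (N : ℕ) (hN : 2 ≤ N) :
    ∑ n ∈ Ioc 1 N, 1 / (n * Real.log n) ≤ Real.log (Real.log N) + 3 := by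
  have hl2 : (0.69:ℝ) < Real.log 2 := by have := Real.log_two_gt_d9; linarith
  induction N, hN using Nat.le_induction with
  | base =>
    rw [show Ioc 1 2 = {2} by decide]
    simp only [sum_singleton]
    have h1 : 1 / ((2:ℕ) * Real.log (2:ℕ)) ≤ 1 := by
      push_cast
      rw [div_le_one (by positivity)]; linarith
    have h2 : -1 ≤ Real.log (Real.log (2:ℕ)) := by
      push_cast
      have := Real.one_sub_inv_le_log_of_pos (show 0 < Real.log 2 by linarith)
      have : (Real.log 2)⁻¹ ≤ 2 := by
        rw [inv_le_comm₀ (by linarith) (by norm_num)]; linarith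
      linarith
    exact h1.trans (by linarith)
  | succ n hn ih =>
    rw [sum_Ioc_succ_top (by omega)]
    have hn0 : (0:ℝ) < n := by exact_mod_cast (by omega : 0 < n)
    have hn2 : (2:ℝ) ≤ n := by exact_mod_cast hn
    have ha : 0 < Real.log n := Real.log_pos (by linarith)
    have hb : 0 < Real.log ((n:ℝ)+1) := Real.log_pos (by linarith)
    have h1 := Real.one_sub_inv_le_log_of_pos (show 0 < Real.log ((n:ℝ)+1) / Real.log n by positivity)
    have h2 := Real.one_sub_inv_le_log_of_pos (show 0 < ((n:ℝ)+1) / n by positivity)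
    rw [Real.log_div hb.ne' ha.ne'] at h1
    rw [Real.log_div (by positivity) (by positivity)] at h2
    have h3 : 1 / (((n:ℝ)+1) * Real.log ((n:ℝ)+1)) ≤ 1 - (Real.log ((n:ℝ)+1) / Real.log n)⁻¹ := by
      have : 1 - (Real.log ((n:ℝ)+1) / Real.log n)⁻¹ = (Real.log ((n:ℝ)+1) - Real.log n) / Real.log ((n:ℝ)+1) := by
        field_simp
      rw [this, ← div_div]
      gcongr
      refine le_trans (le_of_eq ?_) h2
      field_simp; ring
    push_cast
    linarith

lemma harm_bound (N : ℕ) (hN : 1 ≤ N) : |∑ n ∈ Ioc 0 N, 1 / (n:ℝ) - Real.log N| ≤ 1 := by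
  have h1 := harmonic_le_one_add_log N
  have h2 := log_add_one_le_harmonic N
  have e : ((harmonic N : ℚ):ℝ) = ∑ n ∈ Ioc 0 N, 1 / (n:ℝ) := by
    have := sum_Ioc_shift (fun n => 1/(n:ℝ)) 0 N
    rw [zero_add] at this
    rw [this, harmonic]; push_cast; simp
  rw [e] at h1 h2
  have hN0 : (0:ℝ) < N := by exact_mod_cast hN
  have : Real.log N ≤ Real.log ((N+1:ℕ):ℝ) := Real.log_le_log hN0 (by push_cast; linarith)
  rw [abs_le]; constructor <;> linarith

lemma recip_wt : ∃ C : ℝ, 0 < C ∧ ∀ e : ℝ, |e| ≤ 1 → ∀ N : ℕ, 2 ≤ N →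
    ∑ n ∈ Ioc 1 N, wt e n / (n * Real.log n) ≤ 1/2 * Real.log (Real.log N) + C := by
  obtain ⟨C, hC0, hC⟩ := mertens_wt
  refine ⟨(C + 2) * (1 / Real.log 2) + 3, by positivity, fun e he N hN => ?_⟩
  have key := abel_Ioc (fun n => 1 / Real.log n) (fun n => wt e n / n - 1/2 * (1/(n:ℝ))) (C + 2) 1 N (by omega)
    (fun i hi => by
      have hi' : (2:ℝ) ≤ i := by exact_mod_cast hi
      apply one_div_le_one_div_of_le (Real.log_pos (by linarith))
      apply Real.log_le_log (by linarith); push_cast; linarith)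
    (fun i _ => by positivity)
    (fun k hk => by
      have h1 := hC e he k hk
      have h2 := harm_bound k hk
      rw [sum_Ioc_sub _ hk, sum_sub_distrib, ← mul_sum]
      simp only [show Ioc 0 1 = {1} by decide, sum_singleton]
      have : wt e 1 = 0 := by simp [wt]
      rw [this, abs_le]
      have h1' := abs_le.1 h1
      have h2' := abs_le.1 h2
      have h3 : (0:ℝ) / ((1:ℕ):ℝ) - 1/2 * (1 / ((1:ℕ):ℝ)) = -(1/2) := by norm_num
      rw [h3]
      constructor <;> linarith)
  have h3 := sum_inv_nlog N hN
  have e1 : ∑ i ∈ Ioc 1 N, 1 / Real.log i * (wt e i / i - 1/2 * (1/(i:ℝ)))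
     = ∑ n ∈ Ioc 1 N, wt e n / (n * Real.log n) - 1/2 * ∑ n ∈ Ioc 1 N, 1 / (n * Real.log n) := by
    rw [mul_sum, ← sum_sub_distrib]
    apply sum_congr rfl; intro n hn
    have : (2:ℝ) ≤ n := by exact_mod_cast (mem_Ioc.1 hn).1
    have : 0 < Real.log n := Real.log_pos (by linarith)
    field_simp
  rw [e1] at key
  have := (abs_le.1 key).2
  rw [show ((1+1:ℕ):ℝ) = 2 by norm_num] at this
  linarith

end PellAux
namespace PellAux

open Classical in
noncomputable def Dset (n : ℕ) : Finset ℕ := (Ioc 0 n).filter (· ∈ PellD)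

lemma mem_Dset {n d : ℕ} : d ∈ Dset n ↔ (0 < d ∧ d ≤ n) ∧ d ∈ PellD := by
  simp [Dset]

lemma sum_le_exp (F P : Finset ℕ) (g : ℕ → ℝ) (hg : ∀ p, 0 ≤ g p)
    (hF : ∀ m ∈ F, Squarefree m ∧ m.primeFactors ⊆ P) :
    ∑ m ∈ F, ∏ p ∈ m.primeFactors, g p ≤ Real.exp (∑ p ∈ P, g p) := by
  classical
  have hinj : Set.InjOn Nat.primeFactors (F : Set ℕ) := by
    intro a ha b hb hab
    rw [← Nat.prod_primeFactors_of_squarefree (hF a ha).1,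
      ← Nat.prod_primeFactors_of_squarefree (hF b hb).1, hab]
  calc ∑ m ∈ F, ∏ p ∈ m.primeFactors, g p
      = ∑ S ∈ F.image Nat.primeFactors, ∏ p ∈ S, g p :=
        (sum_image (f := fun S => ∏ p ∈ S, g p) hinj).symm
    _ ≤ ∑ S ∈ P.powerset, ∏ p ∈ S, g p := by
        apply sum_le_sum_of_subset_of_nonneg
        · intro S hS
          obtain ⟨m, hm, rfl⟩ := mem_image.1 hS
          exact mem_powerset.2 (hF m hm).2
        · intro S _ _
          exact prod_nonneg fun p _ => hg p
    _ = ∏ p ∈ P, (1 + g p) := (prod_one_add P).symm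
    _ ≤ ∏ p ∈ P, Real.exp (g p) := by
        apply prod_le_prod
        · intro p _; have := hg p; linarith
        · intro p _; rw [add_comm]; exact Real.add_one_le_exp _
    _ = _ := (Real.exp_sum _ _).symm

lemma recip_A : ∃ C : ℝ, 0 < C ∧ ∀ n : ℕ, 2 ≤ n →
    ∑ p ∈ (Ioc 1 n).filter (fun p => p.Prime ∧ (p % 4 = 1 ∨ p % 4 = 2)), 1 / (p:ℝ)
      ≤ 1/2 * Real.log (Real.log n) + C := by
  obtain ⟨C, hC0, hC⟩ := recip_wt
  refine ⟨C + 1/4, by linarith, fun n hn => ?_⟩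
  have h1 := hC 1 (by simp) n hn
  have h2 : ∑ p ∈ Ioc 1 n, (if p = 2 then (1/4:ℝ) else 0) ≤ 1/4 := by
    rw [sum_ite_eq']; split_ifs <;> norm_num
  rw [sum_filter]
  refine le_trans (sum_le_sum fun p hp => ?_) (show ∑ p ∈ Ioc 1 n, (wt 1 p / (p * Real.log p) + (if p = 2 then (1/4:ℝ) else 0)) ≤ _ by rw [sum_add_distrib]; linarith)
  have hp2 : (2:ℝ) ≤ p := by exact_mod_cast (mem_Ioc.1 hp).1
  have hl : 0 < Real.log p := Real.log_pos (by linarith)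
  have h0 : 0 ≤ wt 1 p / (p * Real.log p) := div_nonneg (wt_nonneg 1 (by simp) p) (by positivity)
  split_ifs with hh h2 h2
  · subst h2
    simp only [wt, Nat.prime_two, chi_eq, if_true]
    norm_num
    have : Real.log 2 ≠ 0 := by positivity
    field_simp; norm_num
  · have : p % 4 = 1 := by
      rcases hh.2 with h | h
      · exact h
      · exfalso
        rcases hh.1.eq_two_or_odd with h' | h' <;> omega
    simp only [wt, hh.1, chi_eq, this, if_true]
    apply le_of_eq; field_simp; norm_num
  · linarith
  · linarith

lemma recip_B : ∃ C : ℝ, 0 < C ∧ ∀ n : ℕ, 2 ≤ n →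
    ∑ p ∈ (Ioc 1 n).filter (fun p => p.Prime ∧ p % 4 = 3), 1 / (p:ℝ)
      ≤ 1/2 * Real.log (Real.log n) + C := by
  obtain ⟨C, hC0, hC⟩ := recip_wt
  refine ⟨C, by linarith, fun n hn => ?_⟩
  have h1 := hC (-1) (by simp) n hn
  rw [sum_filter]
  refine le_trans (sum_le_sum fun p hp => ?_) h1
  have hp2 : (2:ℝ) ≤ p := by exact_mod_cast (mem_Ioc.1 hp).1
  have hl : 0 < Real.log p := Real.log_pos (by linarith)
  have h0 : 0 ≤ wt (-1) p / (p * Real.log p) := div_nonneg (wt_nonneg (-1) (by simp) p) (by positivity)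
  split_ifs with hh
  · simp only [wt, hh.1, chi_eq, hh.2, if_true]
    norm_num
    apply le_of_eq; field_simp
  · linarith

/-- many primes 1 mod 4 in `(x, A x]` -/
lemma prime_count : ∃ A : ℕ, 2 ≤ A ∧ ∀ x : ℕ, 2 ≤ x →
    (x:ℝ) / Real.log (A * x) ≤
      (((Ioc x (A * x)).filter (fun p => p.Prime ∧ p % 4 = 1)).card : ℝ) := by
  obtain ⟨C, hC0, hC⟩ := mertens_wt
  obtain ⟨A, hA⟩ := exists_nat_ge (Real.exp (4 * C + 2))
  have hA2 : (2:ℝ) ≤ A := by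
    have := Real.add_one_le_exp (4 * C + 2)
    linarith
  have hA2' : 2 ≤ A := by exact_mod_cast hA2
  refine ⟨A, hA2', fun x hx => ?_⟩
  have hx2 : (2:ℝ) ≤ x := by exact_mod_cast hx
  have hxA : x ≤ A * x := Nat.le_mul_of_pos_left _ (by omega)
  have h1 := (abs_le.1 (hC 1 (by simp) x (by omega))).2
  have h2 := (abs_le.1 (hC 1 (by simp) (A * x) (by omega))).1
  have hlA : 4 * C + 2 ≤ Real.log A := by
    rw [Real.le_log_iff_exp_le (by linarith)]; exact hA
  push_cast at h2
  have hlog : Real.log (A * x) = Real.log A + Real.log x := Real.log_mul (by linarith) (by linarith)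
  have hlpos : 0 < Real.log (A * x) := by
    rw [hlog]; have := Real.log_pos (show (1:ℝ) < x by linarith); linarith
  have h3 : 1 ≤ ∑ p ∈ Ioc x (A * x), wt 1 p / p := by
    rw [sum_Ioc_sub _ hxA]
    linarith
  have h4 : ∑ p ∈ Ioc x (A * x), wt 1 p / p ≤
      ∑ p ∈ (Ioc x (A * x)).filter (fun p => p.Prime ∧ p % 4 = 1), Real.log (A * x) / x := by
    rw [sum_filter]
    apply sum_le_sum
    intro p hp
    have hp' := mem_Ioc.1 hp
    have hpx : (x:ℝ) ≤ p := by exact_mod_cast hp'.1.le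
    have hpA : (p:ℝ) ≤ A * x := by exact_mod_cast hp'.2
    have hl : Real.log p ≤ Real.log (A * x) := Real.log_le_log (by linarith) hpA
    split_ifs with hh
    · simp only [wt, hh.1, chi_eq, hh.2, if_true]
      norm_num
      gcongr
    · simp only [wt]
      split_ifs with hpp
      · have : p % 4 = 3 := by
          rcases hpp.eq_two_or_odd with h' | h'
          · omega
          · have : p % 4 ≠ 1 := fun h => hh ⟨hpp, h⟩
            omega
        simp [chi_eq, this]
      · simp
  rw [sum_const, nsmul_eq_mul] at h4
  rw [div_le_iff₀ hlpos]
  have h5 := h3.trans h4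
  rw [← mul_div_assoc, le_div_iff₀ (by linarith)] at h5
  linarith

lemma prime_mul_mem {m p : ℕ} (hm : m ∈ PellD) (hp : p.Prime) (h4 : p % 4 = 1 ∨ p % 4 = 2)
    (hpm : ¬ p ∣ m) : m * p ∈ PellD := by
  obtain ⟨h1, h2, h3⟩ := hm
  refine ⟨?_, Nat.mul_pos h2 hp.pos, ?_⟩
  · rw [Nat.squarefree_mul ((Nat.Prime.coprime_iff_not_dvd hp).2 hpm).symm]
    exact ⟨h1, hp.prime.squarefree⟩
  · intro q hq hqd
    rcases (hq.dvd_mul).1 hqd with h | h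
    · exact h3 q hq h
    · rw [(Nat.prime_dvd_prime_iff_eq hq hp).1 h]; exact h4

lemma of_mul_mem {m p : ℕ} (hm : m * p ∈ PellD) : m ∈ PellD := by
  obtain ⟨h1, h2, h3⟩ := hm
  exact ⟨h1.of_mul_left, Nat.pos_of_mul_pos_right h2 |> fun h => by
    rcases Nat.eq_zero_or_pos m with h | h
    · simp [h] at h2
    · exact h, fun q hq hqd => h3 q hq (hqd.mul_right p)⟩

lemma sum_harm_le (z : ℝ) (hz : 0 ≤ z) (n : ℕ) :
    ∑ m ∈ Dset n, z ^ m.primeFactors.card / m ≤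
      Real.exp (z * ∑ p ∈ (Ioc 1 n).filter (fun p => p.Prime ∧ (p % 4 = 1 ∨ p % 4 = 2)), 1 / (p:ℝ)) := by
  have := sum_le_exp (Dset n) ((Ioc 1 n).filter (fun p => p.Prime ∧ (p % 4 = 1 ∨ p % 4 = 2)))
    (fun p => z * (1 / (p:ℝ))) (fun p => by positivity) (fun m hm => by
      obtain ⟨⟨h0, hn⟩, hd⟩ := mem_Dset.1 hm
      refine ⟨hd.1, fun p hp => ?_⟩
      have hpp := Nat.prime_of_mem_primeFactors hp
      have hpd := Nat.dvd_of_mem_primeFactors hp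
      exact mem_filter.2 ⟨mem_Ioc.2 ⟨hpp.one_lt, (Nat.le_of_dvd h0 hpd).trans hn⟩, hpp, hd.2.2 p hpp hpd⟩)
  rw [mul_sum]
  refine le_trans (le_of_eq (sum_congr rfl fun m hm => ?_)) this
  have hsq := (mem_Dset.1 hm).2.1
  rw [prod_mul_distrib, prod_const]
  rw [div_eq_mul_one_div]
  congr 1
  simp only [one_div, prod_inv_distrib]
  congr 1
  conv_lhs => rw [← Nat.prod_primeFactors_of_squarefree hsq]
  push_cast; rfl

lemma log_eq_sum {n : ℕ} (h : Squarefree n) : Real.log n = ∑ p ∈ n.primeFactors, Real.log p := by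
  rw [← Real.log_prod]
  · conv_lhs => rw [← Nat.prod_primeFactors_of_squarefree h]
    push_cast; rfl
  · intro p hp
    have := (Nat.prime_of_mem_primeFactors hp).pos
    positivity

lemma sum_log_le (z : ℝ) (hz : 0 ≤ z) (n : ℕ) :
    ∑ d ∈ Dset n, z ^ d.primeFactors.card * Real.log d ≤
      2 * z * n * ∑ m ∈ Dset n, z ^ m.primeFactors.card / m := by
  classical
  have h4 : Real.log 4 ≤ 2 := by
    rw [show (4:ℝ) = 2^2 by norm_num, Real.log_pow]
    have := Real.log_two_lt_d9; push_cast; linarith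
  let f : (_ : ℕ) × ℕ → ℝ := fun x => z * z ^ x.1.primeFactors.card * Real.log x.2
  let T : Finset ((_ : ℕ) × ℕ) := (Dset n).sigma (fun m => (Ioc 0 (n / m)).filter Nat.Prime)
  let S : Finset ((_ : ℕ) × ℕ) := (Dset n).sigma (fun d => d.primeFactors)
  let φ : (_ : ℕ) × ℕ → (_ : ℕ) × ℕ := fun x => ⟨x.1 / x.2, x.2⟩
  have hS : ∀ x ∈ S, ∃ m, x.1 = m * x.2 ∧ m ∈ Dset n ∧ x.2.Prime ∧ m * x.2 ≤ n ∧ ¬ x.2 ∣ m ∧ x.1 / x.2 = m := by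
    rintro ⟨d, p⟩ hx
    obtain ⟨hd, hp⟩ := mem_sigma.1 hx
    obtain ⟨⟨h0, hn⟩, hd⟩ := mem_Dset.1 hd
    have hpp := Nat.prime_of_mem_primeFactors hp
    obtain ⟨m, hm⟩ := Nat.dvd_of_mem_primeFactors hp
    simp only at *
    rw [mul_comm] at hm
    subst hm
    have hmD := of_mul_mem hd
    refine ⟨m, rfl, mem_Dset.2 ⟨⟨hmD.2.1, (Nat.le_mul_of_pos_right m hpp.pos).trans hn⟩, hmD⟩, hpp, hn, ?_, Nat.mul_div_cancel _ hpp.pos⟩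
    intro hdvd
    have := Nat.squarefree_mul_iff.1 hd.1
    exact hpp.one_lt.ne' (Nat.eq_one_of_dvd_coprimes this.1 hdvd dvd_rfl)
  have e1 : ∑ d ∈ Dset n, z ^ d.primeFactors.card * Real.log d = ∑ x ∈ S, f (φ x) := by
    rw [sum_sigma]
    apply sum_congr rfl
    intro d hd
    rw [log_eq_sum (mem_Dset.1 hd).2.1, mul_sum]
    apply sum_congr rfl
    intro p hp
    obtain ⟨m, h1, h2, h3, h4, h5, h6⟩ := hS ⟨d, p⟩ (mem_sigma.2 ⟨hd, hp⟩)
    simp only [f, φ] at *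
    rw [h6]
    congr 1
    rw [h1, Nat.Coprime.primeFactors_mul ((Nat.Prime.coprime_iff_not_dvd h3).2 h5).symm,
      card_union_of_disjoint, h3.primeFactors, card_singleton, pow_succ, mul_comm]
    rw [h3.primeFactors, disjoint_singleton_right]
    intro hc
    exact h5 (Nat.dvd_of_mem_primeFactors hc)
  have hinj : Set.InjOn φ (S : Set ((_ : ℕ) × ℕ)) := by
    intro x hx y hy hxy
    obtain ⟨m, h1, h2, h3, h4, h5, h6⟩ := hS x hx
    obtain ⟨m', h1', h2', h3', h4', h5', h6'⟩ := hS y hy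
    obtain ⟨d, p⟩ := x
    obtain ⟨d', p'⟩ := y
    simp only [φ, Sigma.mk.injEq, heq_eq_eq] at *
    obtain ⟨ha, hb⟩ := hxy
    refine ⟨?_, hb⟩
    rw [h1, h1', ← h6, ← h6', ha, hb]
  have hfn : ∀ x, 0 ≤ f x := fun x => by simp only [f]; positivity
  have e2 : ∑ x ∈ S, f (φ x) ≤ ∑ x ∈ T, f x := by
    rw [← sum_image (f := f) hinj]
    apply sum_le_sum_of_subset_of_nonneg
    · intro y hy
      obtain ⟨x, hx, rfl⟩ := mem_image.1 hy
      obtain ⟨m, h1, h2, h3, h4, h5, h6⟩ := hS x hx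
      simp only [φ, h6]
      refine mem_sigma.2 ⟨h2, mem_filter.2 ⟨mem_Ioc.2 ⟨h3.pos, ?_⟩, h3⟩⟩
      rw [Nat.le_div_iff_mul_le (mem_Dset.1 h2).1.1, mul_comm]; exact h4
    · intro x _ _; exact hfn x
  rw [e1]
  refine e2.trans ?_
  rw [sum_sigma, mul_sum]
  apply sum_le_sum
  intro m hm
  simp only [f]
  rw [← mul_sum]
  have hm0 : (0:ℝ) < m := by exact_mod_cast (mem_Dset.1 hm).1.1
  have ht := Chebyshev.theta_le_log4_mul_x (x := ((n / m : ℕ):ℝ)) (by positivity)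
  rw [Chebyshev.theta, Nat.floor_natCast] at ht
  have hq : ((n / m : ℕ):ℝ) ≤ n / m := Nat.cast_div_le
  have ht2 : ∑ p ∈ (Ioc 0 (n / m)).filter Nat.Prime, Real.log p ≤ 2 * (n / m) := by
    refine ht.trans ?_
    gcongr
  calc z * z ^ m.primeFactors.card * ∑ p ∈ (Ioc 0 (n / m)).filter Nat.Prime, Real.log p
      ≤ z * z ^ m.primeFactors.card * (2 * (n / m)) := by gcongr
    _ = _ := by ring

lemma upper : ∃ C : ℝ, 0 < C ∧ ∀ n : ℕ, 2 ≤ n → ∀ z : ℝ, 0 ≤ z → z ≤ 3 →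
    (∑ d ∈ Dset n, z ^ d.primeFactors.card) * Real.log n ≤
      C * n * Real.exp (z / 2 * Real.log (Real.log n)) := by
  obtain ⟨C, hC0, hC⟩ := recip_A
  refine ⟨7 * Real.exp (3 * C), by positivity, fun n hn z hz hz3 => ?_⟩
  have h1 := sum_log_le z hz n
  have h2 := sum_harm_le z hz n
  have h3 := hC n hn
  have hn0 : (0:ℝ) < n := by exact_mod_cast (by omega : 0 < n)
  set H := ∑ m ∈ Dset n, z ^ m.primeFactors.card / m
  have hH0 : 0 ≤ H := sum_nonneg fun m _ => by positivity
  have h4 : (∑ d ∈ Dset n, z ^ d.primeFactors.card) * Real.log n ≤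
      ∑ d ∈ Dset n, z ^ d.primeFactors.card * Real.log d + n * H := by
    rw [sum_mul, mul_sum, ← sum_add_distrib]
    apply sum_le_sum
    intro d hd
    have hd0 : (0:ℝ) < d := by exact_mod_cast (mem_Dset.1 hd).1.1
    have : Real.log n ≤ Real.log d + n / d := by
      have := Real.log_le_self (x := (n:ℝ)/d) (by positivity)
      rw [Real.log_div hn0.ne' hd0.ne'] at this
      linarith
    calc z ^ d.primeFactors.card * Real.log n ≤ z ^ d.primeFactors.card * (Real.log d + n / d) := by gcongr
      _ = _ := by ring
  have h5 : H ≤ Real.exp (3 * C) * Real.exp (z / 2 * Real.log (Real.log n)) := by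
    rw [← Real.exp_add]
    refine h2.trans (Real.exp_le_exp.2 ?_)
    calc _ ≤ z * (1/2 * Real.log (Real.log n) + C) := by gcongr
      _ ≤ _ := by nlinarith
  calc _ ≤ 2 * z * n * H + n * H := h4.trans (by linarith)
    _ ≤ 2 * 3 * n * H + n * H := by gcongr
    _ = 7 * n * H := by ring
    _ ≤ 7 * n * (Real.exp (3 * C) * Real.exp (z / 2 * Real.log (Real.log n))) := by gcongr
    _ = _ := by ring

end PellAux
namespace PellAux

lemma decomp (a : ℕ) : Squarefree a → ∃ m k : ℕ, a = m * k ∧ m ∈ PellD ∧ Squarefree k ∧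
    (∀ p : ℕ, p.Prime → p ∣ k → p % 4 = 3) := by
  induction a using induction_on_primes with
  | zero => intro h; simp at h
  | one =>
    intro _
    refine ⟨1, 1, rfl, ⟨squarefree_one, one_pos, ?_⟩, squarefree_one, ?_⟩
    · intro p hp hd; exact absurd (Nat.dvd_one.1 hd) hp.one_lt.ne'
    · intro p hp hd; exact absurd (Nat.dvd_one.1 hd) hp.one_lt.ne'
  | prime_mul p b hp ih =>
    intro hsq
    obtain ⟨hcop, _, hb⟩ := Nat.squarefree_mul_iff.1 hsq
    obtain ⟨m, k, rfl, hm, hk, hk3⟩ := ih hb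
    have hpn : ¬ p ∣ m * k := (Nat.Prime.coprime_iff_not_dvd hp).1 hcop
    by_cases h3 : p % 4 = 3
    · refine ⟨m, k * p, by ring, hm, ?_, ?_⟩
      · rw [Nat.squarefree_mul ((Nat.Prime.coprime_iff_not_dvd hp).2 fun h => hpn (h.mul_left m)).symm]
        exact ⟨hk, hp.prime.squarefree⟩
      · intro q hq hqd
        rcases (hq.dvd_mul).1 hqd with h | h
        · exact hk3 q hq h
        · rw [(Nat.prime_dvd_prime_iff_eq hq hp).1 h]; exact h3
    · refine ⟨m * p, k, by ring, prime_mul_mem hm hp ?_ fun h => hpn (h.mul_right k), hk, hk3⟩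
      rcases hp.eq_two_or_odd with h' | h' <;> omega

lemma harm_ge (N : ℕ) (hN : 1 ≤ N) : Real.log N ≤ ∑ n ∈ Ioc 0 N, 1 / (n:ℝ) := by
  have h2 := log_add_one_le_harmonic N
  have e : ((harmonic N : ℚ):ℝ) = ∑ n ∈ Ioc 0 N, 1 / (n:ℝ) := by
    have := sum_Ioc_shift (fun n => 1/(n:ℝ)) 0 N
    rw [zero_add] at this
    rw [this, harmonic]; push_cast; simp
  rw [e] at h2
  have hN0 : (0:ℝ) < N := by exact_mod_cast hN
  have : Real.log N ≤ Real.log ((N+1:ℕ):ℝ) := Real.log_le_log hN0 (by push_cast; linarith)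
  linarith

lemma lower_harm : ∃ c : ℝ, 0 < c ∧ ∀ M : ℕ, 2 ≤ M →
    c * Real.exp (1/2 * Real.log (Real.log M)) ≤ ∑ m ∈ Dset M, 1 / (m:ℝ) := by
  classical
  obtain ⟨C, hC0, hC⟩ := recip_B
  have hsum : Summable (fun s : ℕ => 1 / (s:ℝ)^2) := Real.summable_one_div_nat_pow.2 (by norm_num)
  set Z : ℝ := ∑' s : ℕ, 1 / (s:ℝ)^2 with hZ
  have hZ0 : 0 < Z := by
    have := hsum.sum_le_tsum {1} (fun i _ => by positivity)
    simp at this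
    have : (1:ℝ) ≤ Z := by rw [hZ]; simpa using this
    linarith
  refine ⟨1 / (Z * Real.exp C), by positivity, fun M hM => ?_⟩
  have hM1 : (1:ℝ) < M := by exact_mod_cast (by omega : 1 < M)
  have hlM : 0 < Real.log M := Real.log_pos hM1
  let E : Finset ℕ := (Ioc 0 M).filter (fun k => Squarefree k ∧ ∀ p : ℕ, p.Prime → p ∣ k → p % 4 = 3)
  have hE : ∑ k ∈ E, 1 / (k:ℝ) ≤ Real.exp (1/2 * Real.log (Real.log M) + C) := by
    have := sum_le_exp E ((Ioc 1 M).filter (fun p => p.Prime ∧ p % 4 = 3)) (fun p => 1 / (p:ℝ))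
      (fun p => by positivity) (fun k hk => by
        obtain ⟨hk1, hk2, hk3⟩ := mem_filter.1 hk
        obtain ⟨h0, hn⟩ := mem_Ioc.1 hk1
        refine ⟨hk2, fun p hp => ?_⟩
        have hpp := Nat.prime_of_mem_primeFactors hp
        have hpd := Nat.dvd_of_mem_primeFactors hp
        exact mem_filter.2 ⟨mem_Ioc.2 ⟨hpp.one_lt, (Nat.le_of_dvd h0 hpd).trans hn⟩, hpp, hk3 p hpp hpd⟩)
    refine le_trans (le_of_eq (sum_congr rfl fun k hk => ?_)) (this.trans (Real.exp_le_exp.2 (hC M hM)))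
    have hsq := (mem_filter.1 hk).2.1
    simp only [one_div, prod_inv_distrib]
    congr 1
    conv_lhs => rw [← Nat.prod_primeFactors_of_squarefree hsq]
    push_cast; rfl
  have hdec : ∀ n : ℕ, ∃ t : ℕ × ℕ × ℕ, n ∈ Ioc 0 M → (n = t.1 * t.2.1 * t.2.2 ^ 2 ∧
      t ∈ Dset M ×ˢ E ×ˢ Ioc 0 M) := by
    intro n
    by_cases hn : n ∈ Ioc 0 M
    · obtain ⟨h0, hnM⟩ := mem_Ioc.1 hn
      obtain ⟨a, s, has, hsq⟩ := Nat.sq_mul_squarefree n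
      obtain ⟨m, k, rfl, hm, hk, hk3⟩ := decomp a hsq
      refine ⟨(m, k, s), fun _ => ⟨by rw [← has]; ring, ?_⟩⟩
      have hm0 := hm.2.1
      have hk0 : 0 < k := Nat.pos_of_ne_zero hk.ne_zero
      have hs0 : 0 < s := by
        rcases Nat.eq_zero_or_pos s with h | h
        · subst h; simp at has; omega
        · exact h
      have d1 : m ∣ n := ⟨s^2 * k, by rw [← has]; ring⟩
      have d2 : k ∣ n := ⟨s^2 * m, by rw [← has]; ring⟩
      have d3 : s ∣ n := ⟨s * (m * k), by rw [← has]; ring⟩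
      simp only [mem_product, mem_Dset, E, mem_filter, mem_Ioc]
      exact ⟨⟨⟨hm0, (Nat.le_of_dvd h0 d1).trans hnM⟩, hm⟩, ⟨⟨hk0, (Nat.le_of_dvd h0 d2).trans hnM⟩, hk, hk3⟩,
        hs0, (Nat.le_of_dvd h0 d3).trans hnM⟩
    · exact ⟨(0,0,0), fun h => absurd h hn⟩
  choose t ht using hdec
  let g : ℕ × ℕ × ℕ → ℝ := fun x => 1 / (x.1:ℝ) * (1 / (x.2.1:ℝ) * (1 / (x.2.2:ℝ)^2))
  have hinj : Set.InjOn t (Ioc 0 M : Finset ℕ) := by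
    intro a ha b hb hab
    rw [(ht a ha).1, (ht b hb).1, hab]
  have h1 : ∑ n ∈ Ioc 0 M, 1 / (n:ℝ) ≤ ∑ x ∈ Dset M ×ˢ E ×ˢ Ioc 0 M, g x := by
    calc ∑ n ∈ Ioc 0 M, 1 / (n:ℝ) = ∑ n ∈ Ioc 0 M, g (t n) := by
          apply sum_congr rfl
          intro n hn
          conv_lhs => rw [(ht n hn).1]
          simp only [g]; push_cast
          rw [one_div_mul_one_div, one_div_mul_one_div]; ring_nf
      _ = ∑ x ∈ (Ioc 0 M).image t, g x := (sum_image (f := g) hinj).symm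
      _ ≤ _ := by
          apply sum_le_sum_of_subset_of_nonneg
          · intro x hx
            obtain ⟨n, hn, rfl⟩ := mem_image.1 hx
            exact (ht n hn).2
          · intro x _ _; simp only [g]; positivity
  have h2 : ∑ x ∈ Dset M ×ˢ E ×ˢ Ioc 0 M, g x =
      (∑ m ∈ Dset M, 1 / (m:ℝ)) * ((∑ k ∈ E, 1 / (k:ℝ)) * ∑ s ∈ Ioc 0 M, 1 / (s:ℝ)^2) := by
    rw [sum_mul_sum E, ← sum_product', sum_mul_sum, ← sum_product']
  have h3 : ∑ s ∈ Ioc 0 M, 1 / (s:ℝ)^2 ≤ Z := hsum.sum_le_tsum _ (fun i _ => by positivity)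
  have h4 := harm_ge M (by omega)
  have hexp : Real.log M = Real.exp (1/2 * Real.log (Real.log M)) * Real.exp (1/2 * Real.log (Real.log M)) := by
    rw [← Real.exp_add, ← add_mul]; norm_num; rw [Real.exp_log hlM]
  set S := ∑ m ∈ Dset M, 1 / (m:ℝ)
  have hS0 : 0 ≤ S := sum_nonneg fun m _ => by positivity
  set X := Real.exp (1/2 * Real.log (Real.log M))
  have hX : 0 < X := Real.exp_pos _
  have h5 : X * X ≤ S * ((X * Real.exp C) * Z) := by
    rw [← hexp]
    refine (h4.trans h1).trans ?_
    rw [h2]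
    rw [Real.exp_add] at hE
    have : 0 ≤ ∑ k ∈ E, 1 / (k:ℝ) := sum_nonneg fun m _ => by positivity
    gcongr
  have h6 : X ≤ S * (Real.exp C * Z) := by
    have : X * X ≤ X * (S * (Real.exp C * Z)) := by linarith
    exact le_of_mul_le_mul_left this hX
  rw [div_mul_eq_mul_div, one_mul, div_le_iff₀ (by positivity)]
  linarith

lemma lower : ∃ c : ℝ, 0 < c ∧ ∃ n0 : ℕ, 2 ≤ n0 ∧ ∀ n : ℕ, n0 ≤ n →
    c * n * Real.exp (1/2 * Real.log (Real.log n)) ≤ (Dset n).card * Real.log n := by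
  classical
  obtain ⟨c, hc0, hc⟩ := lower_harm
  obtain ⟨A, hA2, hA⟩ := prime_count
  refine ⟨c / (2 * A * Real.exp (1/2 * Real.log 8)), by positivity, A ^ 4, ?_, fun n hn => ?_⟩
  · calc 2 ≤ A := hA2
      _ ≤ A ^ 4 := Nat.le_self_pow (by norm_num) A
  set M := Nat.sqrt (Nat.sqrt n) with hM
  have hMA : A ≤ M := by
    rw [hM, Nat.le_sqrt', Nat.le_sqrt']
    calc (A^2)^2 = A^4 := by ring
      _ ≤ n := hn
  have hM4 : M ^ 4 ≤ n := by
    calc M^4 = (M^2)^2 := by ring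
      _ ≤ (Nat.sqrt n)^2 := Nat.pow_le_pow_left (Nat.sqrt_le' _) 2
      _ ≤ n := Nat.sqrt_le' n
  have hM4' : n < (M+1)^4 := by
    calc n < (Nat.sqrt n + 1)^2 := Nat.lt_succ_sqrt' n
      _ ≤ ((M+1)^2)^2 := Nat.pow_le_pow_left (Nat.lt_succ_sqrt' (Nat.sqrt n)) 2
      _ = (M+1)^4 := by ring
  have hM2 : 2 ≤ M := hA2.trans hMA
  have hMn : A * M * M ≤ n := by
    calc A * M * M ≤ M * M * M := by gcongr
      _ ≤ M * M * M * M := Nat.le_mul_of_pos_right _ (by omega)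
      _ = M^4 := by ring
      _ ≤ n := hM4
  have hn2 : 2 ≤ n := by nlinarith
  have hx : ∀ m ∈ Dset M, M ≤ n / (A * m) := by
    intro m hm
    have := (mem_Dset.1 hm).1
    rw [Nat.le_div_iff_mul_le (Nat.mul_pos (by omega) this.1)]
    calc M * (A * m) ≤ M * (A * M) := by gcongr; exact this.2
      _ = A * M * M := by ring
      _ ≤ n := hMn
  let T : Finset ((_ : ℕ) × ℕ) := (Dset M).sigma
    (fun m => (Ioc (n / (A * m)) (A * (n / (A * m)))).filter (fun p => p.Prime ∧ p % 4 = 1))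
  have hT : ∀ x ∈ T, x.1 ∈ Dset M ∧ M < x.2 ∧ x.2.Prime ∧ x.1 * x.2 ∈ Dset n := by
    rintro ⟨m, p⟩ hx'
    obtain ⟨hm, hp⟩ := mem_sigma.1 hx'
    simp only [mem_filter, mem_Ioc] at hm hp ⊢
    obtain ⟨⟨hp1, hp2⟩, hpp, hp4⟩ := hp
    have hMp : M < p := (hx m hm).trans_lt hp1
    obtain ⟨⟨hm0, hmM⟩, hmD⟩ := mem_Dset.1 hm
    refine ⟨hm, hMp, hpp, mem_Dset.2 ⟨⟨Nat.mul_pos hm0 hpp.pos, ?_⟩, prime_mul_mem hmD hpp (Or.inl hp4) ?_⟩⟩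
    · calc m * p ≤ m * (A * (n / (A * m))) := by gcongr
        _ = (A * m) * (n / (A * m)) := by ring
        _ ≤ n := Nat.mul_div_le _ _
    · intro hd
      have := Nat.le_of_dvd hm0 hd
      omega
  have hcard : T.card ≤ (Dset n).card := by
    apply card_le_card_of_injOn (fun x => x.1 * x.2)
    · intro x hx'; exact (hT x hx').2.2.2
    · intro x hx' y hy hxy
      obtain ⟨h1, h2, h3, h4⟩ := hT x hx'
      obtain ⟨h1', h2', h3', h4'⟩ := hT y hy
      obtain ⟨m, p⟩ := x
      obtain ⟨m', p'⟩ := y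
      simp only at *
      have hpp : p = p' := by
        have hd : p ∣ m' * p' := by rw [← hxy]; exact dvd_mul_left p m
        rcases (h3.dvd_mul).1 hd with h | h
        · have := Nat.le_of_dvd (mem_Dset.1 h1').1.1 h
          have := (mem_Dset.1 h1').1.2
          omega
        · exact (Nat.prime_dvd_prime_iff_eq h3 h3').1 h
      subst hpp
      rw [Nat.eq_of_mul_eq_mul_right h3.pos hxy]
  have hn0 : (0:ℝ) < n := by exact_mod_cast (by omega : 0 < n)
  have hln : 0 < Real.log n := Real.log_pos (by exact_mod_cast (by omega : 1 < n))
  have hA0 : (0:ℝ) < A := by exact_mod_cast (by omega : 0 < A)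
  have hM1 : (2:ℝ) ≤ M := by exact_mod_cast hM2
  have hlM : 0 < Real.log M := Real.log_pos (by linarith)
  have hbig : ∑ m ∈ Dset M, (n / (2 * A * Real.log n)) * (1 / (m:ℝ)) ≤ (T.card : ℝ) := by
    rw [card_sigma]; push_cast
    apply sum_le_sum
    intro m hm
    have hxm := hx m hm
    have h1 := hA (n / (A * m)) (hM2.trans hxm)
    refine le_trans ?_ h1
    have hm0 := (mem_Dset.1 hm).1.1
    have hm0' : (0:ℝ) < m := by exact_mod_cast hm0
    have hle : A * (n / (A * m)) ≤ n := by
      calc A * (n / (A * m)) ≤ (A * m) * (n / (A * m)) := by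
            apply Nat.mul_le_mul_right; exact Nat.le_mul_of_pos_right _ hm0
        _ ≤ n := Nat.mul_div_le _ _
    set x := n / (A * m) with hxdef
    have hx2 : (2:ℝ) ≤ x := by exact_mod_cast hM2.trans hxm
    have hA2' : (2:ℝ) ≤ A := by exact_mod_cast hA2
    have hlog : Real.log (A * x) ≤ Real.log n := Real.log_le_log (by positivity) (by exact_mod_cast hle)
    have hlog0 : 0 < Real.log (A * x) := Real.log_pos (by nlinarith)
    have hfl : (n:ℝ) / (A * m) ≤ x + 1 := by
      have := (Nat.lt_floor_add_one ((n:ℝ) / ((A * m : ℕ):ℝ))).le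
      rw [Nat.floor_div_eq_div] at this
      push_cast at this
      exact this
    calc (n / (2 * A * Real.log n)) * (1 / (m:ℝ)) = (n / (A * m) / 2) / Real.log n := by
          field_simp
      _ ≤ x / Real.log n := by gcongr; linarith
      _ ≤ x / Real.log (A * x) := by gcongr
  rw [← mul_sum] at hbig
  have hS := hc M hM2
  have hll : Real.log (Real.log n) ≤ Real.log (Real.log M) + Real.log 8 := by
    rw [← Real.log_mul hlM.ne' (by norm_num)]
    apply Real.log_le_log hln
    have : (n:ℝ) ≤ M ^ 8 := by
      have h : n ≤ M ^ 8 := by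
        calc n ≤ (M+1)^4 := hM4'.le
          _ ≤ (M^2)^4 := Nat.pow_le_pow_left (by nlinarith) 4
          _ = M^8 := by ring
      exact_mod_cast h
    have := Real.log_le_log hn0 this
    rw [Real.log_pow] at this
    push_cast at this; linarith
  have hexp : Real.exp (1/2 * Real.log (Real.log n)) ≤
      Real.exp (1/2 * Real.log (Real.log M)) * Real.exp (1/2 * Real.log 8) := by
    rw [← Real.exp_add]; apply Real.exp_le_exp.2; linarith
  have hcard' : (T.card:ℝ) ≤ (Dset n).card := by exact_mod_cast hcard
  calc c / (2 * A * Real.exp (1/2 * Real.log 8)) * n * Real.exp (1/2 * Real.log (Real.log n))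
      ≤ c / (2 * A * Real.exp (1/2 * Real.log 8)) * n *
        (Real.exp (1/2 * Real.log (Real.log M)) * Real.exp (1/2 * Real.log 8)) := by gcongr
    _ = (n / (2 * A * Real.log n)) * (c * Real.exp (1/2 * Real.log (Real.log M))) * Real.log n := by
        have := Real.exp_pos (1/2 * Real.log 8)
        field_simp
    _ ≤ (n / (2 * A * Real.log n)) * (∑ m ∈ Dset M, 1 / (m:ℝ)) * Real.log n := by gcongr
    _ ≤ _ := by
        apply mul_le_mul_of_nonneg_right _ hln.le
        exact hbig.trans hcard'

lemma key : ∃ C : ℝ, 0 < C ∧ ∃ n0 : ℕ, 2 ≤ n0 ∧ ∀ n : ℕ, n0 ≤ n → ∀ z : ℝ, 0 ≤ z → z ≤ 3 →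
    ∑ d ∈ Dset n, z ^ d.primeFactors.card ≤
      C * (Dset n).card * Real.exp ((z - 1) / 2 * Real.log (Real.log n)) := by
  obtain ⟨C, hC0, hC⟩ := upper
  obtain ⟨c, hc0, n0, hn0, hc⟩ := lower
  refine ⟨C / c, by positivity, n0, hn0, fun n hn z hz hz3 => ?_⟩
  have h1 := hC n (hn0.trans hn) z hz hz3
  have h2 := hc n hn
  have hln : 0 < Real.log n := Real.log_pos (by exact_mod_cast (by omega : 1 < n))
  have e : Real.exp (z / 2 * Real.log (Real.log n)) =
      Real.exp (1/2 * Real.log (Real.log n)) * Real.exp ((z - 1) / 2 * Real.log (Real.log n)) := by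
    rw [← Real.exp_add]; congr 1; ring
  rw [e] at h1
  set X := Real.exp (1/2 * Real.log (Real.log n))
  set Y := Real.exp ((z - 1) / 2 * Real.log (Real.log n))
  have hY : 0 < Y := Real.exp_pos _
  refine le_of_mul_le_mul_right ?_ hln
  calc _ ≤ C * n * (X * Y) := h1
    _ = C / c * Y * (c * n * X) := by field_simp
    _ ≤ C / c * Y * ((Dset n).card * Real.log n) := by gcongr
    _ = _ := by ring

/-- Chernoff for one sign. -/
lemma tail (C : ℝ) (hC0 : 0 < C) (n : ℕ) (L L' : ℝ) (hL : 1 ≤ L) (hL1 : L' ≤ L) (hL2 : L ≤ L' + 1)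
    (hkey : ∀ z : ℝ, 0 ≤ z → z ≤ 3 →
    ∑ d ∈ Dset n, z ^ d.primeFactors.card ≤ C * (Dset n).card * Real.exp ((z - 1) / 2 * L'))
    (s : ℝ) (hs : s = 1 ∨ s = -1) :
    (((Dset n).filter (fun d => L ^ ((2:ℝ)/3) ≤ s * ((d.primeFactors.card : ℝ) - 1/2 * L))).card : ℝ)
      ≤ C * Real.exp 1 * (Dset n).card * Real.exp (- (1/2) * L ^ ((1:ℝ)/3)) := by
  have hL0 : 0 < L := by linarith
  set t := L ^ (-(1:ℝ)/3) with ht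
  have ht0 : 0 < t := Real.rpow_pos_of_pos hL0 _
  have ht1 : t ≤ 1 := Real.rpow_le_one_of_one_le_of_nonpos hL (by norm_num)
  have htL : t * L ^ ((2:ℝ)/3) = L ^ ((1:ℝ)/3) := by
    rw [ht, ← Real.rpow_add hL0]; norm_num
  have htL2 : t ^ 2 * L = L ^ ((1:ℝ)/3) := by
    rw [ht, ← Real.rpow_natCast, ← Real.rpow_mul hL0.le]
    conv_lhs => rw [← Real.rpow_one L, ← Real.rpow_mul hL0.le]
    rw [← Real.rpow_add hL0]; norm_num
  have hst : |s * t| ≤ 1 := by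
    rw [abs_mul, abs_of_pos ht0]
    rcases hs with h | h <;> simp [h, ht1]
  have hs2 : s ^ 2 = 1 := by rcases hs with h | h <;> simp [h]
  have hexp := Real.abs_exp_sub_one_sub_id_le hst
  set z := Real.exp (s * t) with hz
  have hz0 : 0 < z := Real.exp_pos _
  have hzu : z - 1 ≤ s * t + t ^ 2 := by
    have := (abs_le.1 hexp).2
    rw [mul_pow, hs2] at this; linarith
  have hz3 : z ≤ 3 := by
    have := (abs_le.1 hst).2
    nlinarith
  have h1 := hkey z hz0.le hz3
  have h2 : (((Dset n).filter (fun d => L ^ ((2:ℝ)/3) ≤ s * ((d.primeFactors.card : ℝ) - 1/2 * L))).card : ℝ)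
      * Real.exp (s * t * (1/2 * L) + t * L ^ ((2:ℝ)/3)) ≤ ∑ d ∈ Dset n, z ^ d.primeFactors.card := by
    rw [← nsmul_eq_mul, ← sum_const]
    refine le_trans (sum_le_sum fun d hd => ?_) (sum_le_sum_of_subset_of_nonneg (filter_subset _ _)
      (fun d _ _ => by positivity))
    have hd' := (mem_filter.1 hd).2
    rw [hz, ← Real.exp_nat_mul]
    apply Real.exp_le_exp.2
    have := mul_le_mul_of_nonneg_left hd' ht0.le
    nlinarith
  have h3 : (z - 1) / 2 * L' ≤ (s * t + t^2) / 2 * L + 1 := by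
    have hza : |z - 1| ≤ 2 := by
      rw [abs_le]; constructor <;> linarith
    have : (z - 1) / 2 * L' = (z - 1) / 2 * L + (z - 1)/2 * (L' - L) := by ring
    have h5 : (z - 1)/2 * (L' - L) ≤ 1 := by
      have := abs_le.1 hza
      nlinarith
    have h6 : (z - 1) / 2 * L ≤ (s * t + t^2) / 2 * L := by gcongr
    linarith
  have h4 : _ ≤ C * (Dset n).card * Real.exp ((s * t + t^2) / 2 * L + 1) :=
    (h2.trans h1).trans (by gcongr)
  have hpos := Real.exp_pos (s * t * (1/2 * L) + t * L ^ ((2:ℝ)/3))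
  refine le_of_mul_le_mul_right (h4.trans (le_of_eq ?_)) hpos
  rw [show C * Real.exp 1 * (Dset n).card * Real.exp (- (1/2) * L ^ ((1:ℝ)/3)) *
     Real.exp (s * t * (1/2 * L) + t * L ^ ((2:ℝ)/3)) = C * (Dset n).card * (Real.exp 1 * Real.exp (- (1/2) * L ^ ((1:ℝ)/3)) *
     Real.exp (s * t * (1/2 * L) + t * L ^ ((2:ℝ)/3))) by ring]
  rw [← Real.exp_add, ← Real.exp_add]
  congr 2
  rw [htL]
  linear_combination (1/2) * htL2

end PellAux
open PellAux
/-- The Erdős–Kac type estimate: the number of `d ∈ 𝒟(N)` with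
`|ω(d) − ½ log log N| ≥ (log log N)^{2/3}` is `O(|𝒟(N)|/(log log N)^{1/100})`. -/
theorem count_atypical_number_of_prime_factors :
    ∃ C : ℝ, 0 < C ∧ ∀ N : ℝ, (10 : ℝ) ^ 1000 ≤ N →
      (({d ∈ PellD | (d : ℝ) < N ∧
          (Real.log (Real.log N)) ^ ((2 : ℝ) / 3) ≤
            |(d.primeFactors.card : ℝ) - (1 / 2) * Real.log (Real.log N)|}.ncard : ℝ)) ≤
        C * ({d ∈ PellD | (d : ℝ) < N}.ncard : ℝ) /
          (Real.log (Real.log N)) ^ ((1 : ℝ) / 100) := by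
  classical
  obtain ⟨C, hC0, n0, hn0, hkey⟩ := key
  refine ⟨4 * C * Real.exp 1 + n0, by positivity, fun N hN => ?_⟩
  have h10 : (10:ℝ) ≤ 10 ^ 1000 := le_self_pow₀ (by norm_num) (by norm_num)
  have hN10 : (10:ℝ) ≤ N := h10.trans hN
  have hN0 : 0 < N := lt_of_lt_of_le (by norm_num) hN10
  have hlogN : 600 ≤ Real.log N := by
    have h := Real.log_le_log (by positivity) hN
    rw [Real.log_pow] at h
    have h2 : Real.log 2 ≤ Real.log 10 := Real.log_le_log (by norm_num) (by norm_num)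
    have := Real.log_two_gt_d9
    push_cast at h
    clear hN h10
    linarith
  clear hN h10
  set L := Real.log (Real.log N) with hLdef
  have hL : 1 ≤ L := by
    rw [hLdef, Real.le_log_iff_exp_le (by linarith)]
    have := Real.exp_one_lt_d9
    linarith
  have hL0 : 0 < L := by linarith
  obtain ⟨n, hn⟩ : ∃ n, ⌈N⌉₊ = n + 1 := Nat.exists_eq_succ_of_ne_zero (Nat.ceil_pos.2 hN0).ne'
  have hlt : ∀ d : ℕ, (d:ℝ) < N ↔ d ≤ n := by
    intro d; rw [← Nat.lt_ceil, hn]; omega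
  have e1 : {d ∈ PellD | (d : ℝ) < N} = ((Dset n : Finset ℕ) : Set ℕ) := by
    ext d
    simp only [Set.mem_ofPred_eq, mem_coe, mem_Dset, hlt]
    exact ⟨fun h => ⟨⟨h.1.2.1, h.2⟩, h.1⟩, fun h => ⟨h.2, h.1.2⟩⟩
  have e2 : {d ∈ PellD | (d : ℝ) < N ∧ L ^ ((2 : ℝ) / 3) ≤ |(d.primeFactors.card : ℝ) - (1 / 2) * L|}
      = (((Dset n).filter (fun d => L ^ ((2 : ℝ) / 3) ≤ |(d.primeFactors.card : ℝ) - (1 / 2) * L|) : Finset ℕ) : Set ℕ) := by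
    ext d
    simp only [Set.mem_ofPred_eq, mem_coe, mem_filter, mem_Dset, hlt]
    exact ⟨fun h => ⟨⟨⟨h.1.2.1, h.2.1⟩, h.1⟩, h.2.2⟩, fun h => ⟨h.1.2, h.1.1.2, h.2⟩⟩
  rw [e1, e2, Set.ncard_coe_finset, Set.ncard_coe_finset]
  have hP : 0 < L ^ ((1:ℝ)/100) := Real.rpow_pos_of_pos hL0 _
  rw [le_div_iff₀ hP]
  have hD0 : (0:ℝ) ≤ (Dset n).card := by positivity
  rcases Nat.lt_or_ge n n0 with hlt0 | hge
  · have h1 : (((Dset n).filter (fun d => L ^ ((2 : ℝ) / 3) ≤ |(d.primeFactors.card : ℝ) - (1 / 2) * L|)).card : ℝ) ≤ (Dset n).card := by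
      exact_mod_cast card_filter_le _ _
    have h2 : L ^ ((1:ℝ)/100) ≤ n0 := by
      calc L ^ ((1:ℝ)/100) ≤ L ^ (1:ℝ) := Real.rpow_le_rpow_of_exponent_le hL (by norm_num)
        _ = L := Real.rpow_one L
        _ ≤ Real.log N := Real.log_le_self (by linarith)
        _ ≤ N := Real.log_le_self hN0.le
        _ ≤ ⌈N⌉₊ := Nat.le_ceil N
        _ ≤ n0 := by rw [hn]; exact_mod_cast hlt0
    calc _ ≤ ((Dset n).card : ℝ) * n0 := by gcongr
      _ ≤ _ := by
        have : 0 ≤ 4 * C * Real.exp 1 := by positivity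
        nlinarith
  · have hnN : (n:ℝ) < N := (hlt n).2 le_rfl
    have hNn : N ≤ n + 1 := by
      have := Nat.le_ceil N
      rw [hn] at this; exact_mod_cast this
    have hn0' : (9:ℝ) ≤ n := by linarith
    have hln1 : 1 ≤ Real.log n := by
      rw [Real.le_log_iff_exp_le (by linarith)]
      have := Real.exp_one_lt_d9
      linarith
    have hL1 : Real.log (Real.log n) ≤ L :=
      Real.log_le_log (by linarith) (Real.log_le_log (by linarith) hnN.le)
    have hL2 : L ≤ Real.log (Real.log n) + 1 := by
      have h1 : Real.log N ≤ 2 * Real.log n := by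
        have : N ≤ (n:ℝ)^2 := by nlinarith
        have := Real.log_le_log hN0 this
        rw [Real.log_pow] at this; exact_mod_cast this
      have h2 := Real.log_le_log (by linarith) h1
      rw [Real.log_mul (by norm_num) (by linarith)] at h2
      have := Real.log_two_lt_d9
      linarith
    have t1 := tail C hC0 n L _ hL hL1 hL2 (hkey n hge) 1 (Or.inl rfl)
    have t2 := tail C hC0 n L _ hL hL1 hL2 (hkey n hge) (-1) (Or.inr rfl)
    have hun : (((Dset n).filter (fun d => L ^ ((2 : ℝ) / 3) ≤ |(d.primeFactors.card : ℝ) - (1 / 2) * L|)).card : ℝ)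
        ≤ (((Dset n).filter (fun d => L ^ ((2:ℝ)/3) ≤ 1 * ((d.primeFactors.card : ℝ) - 1/2 * L))).card : ℝ)
        + (((Dset n).filter (fun d => L ^ ((2:ℝ)/3) ≤ (-1) * ((d.primeFactors.card : ℝ) - 1/2 * L))).card : ℝ) := by
      norm_cast
      refine le_trans (card_le_card ?_) (card_union_le _ _)
      intro d hd
      simp only [mem_union, mem_filter] at hd ⊢
      rcases le_abs.1 hd.2 with h | h
      · left; exact ⟨hd.1, by rw [one_mul]; exact h⟩
      · right; refine ⟨hd.1, ?_⟩
        push_cast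
        rw [neg_one_mul]; exact h
    have hexp : Real.exp (- (1/2) * L ^ ((1:ℝ)/3)) * L ^ ((1:ℝ)/100) ≤ 2 := by
      have h1 : L ^ ((1:ℝ)/100) ≤ L ^ ((1:ℝ)/3) := Real.rpow_le_rpow_of_exponent_le hL (by norm_num)
      have h2 := Real.add_one_le_exp ((1/2) * L ^ ((1:ℝ)/3))
      rw [neg_mul, Real.exp_neg, inv_mul_le_iff₀ (Real.exp_pos _)]
      linarith
    calc _ ≤ (2 * (C * Real.exp 1 * (Dset n).card * Real.exp (- (1/2) * L ^ ((1:ℝ)/3)))) * L ^ ((1:ℝ)/100) := by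
          gcongr; linarith
      _ = 2 * (C * Real.exp 1 * (Dset n).card) * (Real.exp (- (1/2) * L ^ ((1:ℝ)/3)) * L ^ ((1:ℝ)/100)) := by ring
      _ ≤ 2 * (C * Real.exp 1 * (Dset n).card) * 2 := by gcongr
      _ ≤ _ := by
        have : (0:ℝ) ≤ n0 * (Dset n).card := by positivity
        nlinarith
end

section
/- Let X₁, …, X_r be nonempty finite sets with product X, let S ⊆ [r], and let (C_T, C_T^acc, F_T, A_T)_{T⊆S} be an additive system on (X,S) such that |A_T| ≤ a for all T ⊆ S (a ≥ 1 a real number). Write δ := |C_∅^acc|/|X|. Then |C_S^acc| / |Cube(X,S)| ≥ δ^{2^{|S|}} · a^{−3^{|S|}}. -/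
/-- `Cube(X,S)`: pairs of points of `X = ∏ᵢ Xᵢ` that agree in all coordinates outside `S`.
(This identifies `∏_{i∈S} Xᵢ² × ∏_{i∉S} Xᵢ` with pairs agreeing off `S`; for `i ∈ S` the two
coordinate projections `pr₁, pr₂` are `x.1.1 i` and `x.1.2 i`.) -/
abbrev Cube {r : ℕ} (X : Fin r → Type*) (S : Finset (Fin r)) : Type _ :=
  {p : ((i : Fin r) → X i) × ((i : Fin r) → X i) // ∀ i ∉ S, p.1 i = p.2 i}

/-- `x̄(T)` for `x̄ ∈ Cube(X,S)` and `T ⊆ S`: those `ȳ ∈ Cube(X,T)` whose `i`-th coordinate,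
for `i ∈ S ∖ T`, is one of the two `i`-th coordinates of `x̄`, and whose remaining coordinates
agree with those of `x̄`. -/
def cubeSel {r : ℕ} (X : Fin r → Type*) (S T : Finset (Fin r)) (x : Cube X S) :
    Set (Cube X T) :=
  {y | (∀ i ∈ S, i ∉ T → (y.1.1 i = x.1.1 i ∨ y.1.1 i = x.1.2 i)) ∧
       ∀ i, i ∉ S \ T → (y.1.1 i = x.1.1 i ∧ y.1.2 i = x.1.2 i)}

/-- An additive system on `(X, S)`. -/
structure AddSystem {r : ℕ} (X : Fin r → Type*) (S : Finset (Fin r)) where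
  /-- The groups `A_T` (finite `F₂`-vector spaces). -/
  A : Finset (Fin r) → Type
  instAdd : ∀ T, AddCommGroup (A T)
  /-- `A_T` is an `F₂`-vector space: every element is `2`-torsion. -/
  two_torsion : ∀ T (v : A T), (letI := instAdd T; v + v = 0)
  instFin : ∀ T, Finite (A T)
  /-- The sets `C_T ⊆ Cube(X,T)`. -/
  C : ∀ T : Finset (Fin r), Set (Cube X T)
  /-- The maps `F_T` (only the values on `C_T` are relevant). -/
  F : ∀ T, Cube X T → A T
  /-- For nonempty `T ⊆ S`, `C_T` consists of the cubes all of whose codimension-one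
  subcubes are accepted. -/
  hC : ∀ T : Finset (Fin r), T ⊆ S → T.Nonempty →
    C T = {x : Cube X T | ∀ i ∈ T, ∀ y ∈ cubeSel X T (T.erase i) x,
      y ∈ C (T.erase i) ∧ (letI := instAdd (T.erase i); F (T.erase i) y = 0)}
  /-- Additivity of `F_T` in each coordinate. -/
  hAdd : ∀ T : Finset (Fin r), T ⊆ S → ∀ x₁ x₂ x₃ : Cube X T,
    x₁ ∈ C T → x₂ ∈ C T → x₃ ∈ C T → ∀ i ∈ T,
    (∀ j, j ≠ i → x₁.1.1 j = x₂.1.1 j ∧ x₁.1.2 j = x₂.1.2 j ∧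
      x₂.1.1 j = x₃.1.1 j ∧ x₂.1.2 j = x₃.1.2 j) →
    x₁.1.2 i = x₂.1.1 i → x₁.1.1 i = x₃.1.1 i → x₂.1.2 i = x₃.1.2 i →
    (letI := instAdd T; F T x₁ + F T x₂ = F T x₃)

/-- `C_T^acc = {x̄ ∈ C_T : F_T(x̄) = 0}`. -/
def AddSystem.Cacc {r : ℕ} {X : Fin r → Type*} {S : Finset (Fin r)} (𝔄 : AddSystem X S)
    (T : Finset (Fin r)) : Set (Cube X T) :=
  {x ∈ 𝔄.C T | letI := 𝔄.instAdd T; 𝔄.F T x = 0}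

attribute [local instance] AddSystem.instAdd AddSystem.instFin

section helpers
open Classical

variable {r : ℕ} {X : Fin r → Type*} {S : Finset (Fin r)}

/-- Replace the coordinate `s` by `p` in both vertices. -/
noncomputable def subC {T : Finset (Fin r)} (s : Fin r) (p : X s) (w : Cube X T) : Cube X T :=
  ⟨(Function.update w.1.1 s p, Function.update w.1.2 s p), by
    intro i hi
    by_cases h : i = s
    · subst h; simp
    · simp [h, w.2 i hi]⟩

/-- Replace the coordinate `s` by the pair `(p,q)`. -/
noncomputable def extC {T : Finset (Fin r)} (s : Fin r) (p q : X s) (w : Cube X T) :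
    Cube X (insert s T) :=
  ⟨(Function.update w.1.1 s p, Function.update w.1.2 s q), by
    intro i hi
    simp only [Finset.mem_insert, not_or] at hi
    simp [hi.1, w.2 i hi.2]⟩

theorem mem_C_iff (𝔄 : AddSystem X S) {T : Finset (Fin r)} (hT : T ⊆ S) (hne : T.Nonempty)
    (x : Cube X T) : x ∈ 𝔄.C T ↔ ∀ i ∈ T, ∀ U, U = T.erase i →
      ∀ y ∈ cubeSel X T U x, y ∈ 𝔄.Cacc U := by
  rw [𝔄.hC T hT hne]
  constructor
  · intro h i hi U hU y hy
    subst hU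
    exact h i hi y hy
  · intro h i hi y hy
    exact h i hi _ rfl y hy

theorem sel_trans {T U V : Finset (Fin r)} (hUT : U ⊆ T) (hVU : V ⊆ U) {x : Cube X T}
    {y : Cube X U} {z : Cube X V} (hy : y ∈ cubeSel X T U x) (hz : z ∈ cubeSel X U V y) :
    z ∈ cubeSel X T V x := by
  obtain ⟨hy1, hy2⟩ := hy
  obtain ⟨hz1, hz2⟩ := hz
  simp only [Finset.mem_sdiff, not_and, not_not] at hy2 hz2
  refine ⟨fun i hi hiV => ?_, fun i hi => ?_⟩
  · by_cases hiU : i ∈ U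
    · have := hy2 i (fun _ => hiU)
      rw [← this.1, ← this.2]
      exact hz1 i hiU hiV
    · rw [(hz2 i (fun h => absurd h hiU)).1]
      exact hy1 i hi hiU
  · simp only [Finset.mem_sdiff, not_and, not_not] at hi
    have h1 := hz2 i (fun h => hi (hUT h))
    have h2 := hy2 i (fun h => hVU (hi h))
    exact ⟨h1.1.trans h2.1, h1.2.trans h2.2⟩

theorem sel_sub {T U : Finset (Fin r)} {s : Fin r} (hs : s ∉ T) (p : X s)
    {w : Cube X T} {v : Cube X U} (h : v ∈ cubeSel X T U w) :
    subC s p v ∈ cubeSel X T U (subC s p w) := by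
  refine ⟨fun i hi hiU => ?_, fun i hi => ?_⟩
  · have : i ≠ s := fun e => hs (e ▸ hi)
    simpa [subC, this] using h.1 i hi hiU
  · by_cases e : i = s
    · subst e; simp [subC]
    · simpa [subC, e] using h.2 i hi

theorem lemA (𝔄 : AddSystem X S) {T : Finset (Fin r)} {s : Fin r} (hs : s ∉ T)
    (hT : insert s T ⊆ S) (w : Cube X T) (p q : X s) :
    extC s p q w ∈ 𝔄.C (insert s T) ↔
      subC s p w ∈ 𝔄.Cacc T ∧ subC s q w ∈ 𝔄.Cacc T ∧
      ∀ i ∈ T, ∀ v ∈ cubeSel X T (T.erase i) w,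
        extC s p q v ∈ 𝔄.Cacc (insert s (T.erase i)) := by
  rw [mem_C_iff 𝔄 hT (Finset.insert_nonempty _ _)]
  constructor
  · intro h
    refine ⟨?_, ?_, ?_⟩
    · refine h s (Finset.mem_insert_self _ _) T (Finset.erase_insert hs).symm _ ⟨?_, ?_⟩
      · intro i hi hiT
        have : i = s := by simpa [hiT] using hi
        subst this; simp [subC, extC]
      · intro i hi
        have : i ≠ s := by rintro rfl; simp [hs] at hi
        simp [subC, extC, this]
    · refine h s (Finset.mem_insert_self _ _) T (Finset.erase_insert hs).symm _ ⟨?_, ?_⟩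
      · intro i hi hiT
        have : i = s := by simpa [hiT] using hi
        subst this; simp [subC, extC]
      · intro i hi
        have : i ≠ s := by rintro rfl; simp [hs] at hi
        simp [subC, extC, this]
    · intro i hi v hv
      have his : i ≠ s := fun e => hs (e ▸ hi)
      refine h i (Finset.mem_insert_of_mem hi) _ (Finset.erase_insert_of_ne his.symm).symm _
        ⟨?_, ?_⟩
      · intro j hj hj'
        simp only [Finset.mem_insert, not_or] at hj hj'
        simpa [extC, hj'.1] using hv.1 j (hj.resolve_left hj'.1) hj'.2
      · intro j hj
        by_cases e : j = s
        · subst e; simp [extC]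
        · simpa [extC, e] using hv.2 j (by simp [e] at hj ⊢; exact hj)
  · rintro ⟨hp, hq, h⟩ i hi U hU y hy
    by_cases his : i = s
    · subst his
      rw [Finset.erase_insert hs] at hU
      subst hU
      have key : ∀ j, j ≠ i → y.1.1 j = w.1.1 j ∧ y.1.2 j = w.1.2 j := by
        intro j hj
        have := hy.2 j (by simp [hj])
        simpa [extC, hj] using this
      have hyi := y.2 i hs
      rcases hy.1 i (Finset.mem_insert_self _ _) hs with e | e
      · have : y = subC i p w := by
          apply Subtype.ext
          refine Prod.ext (funext fun j => ?_) (funext fun j => ?_) <;> by_cases hj : j = i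
          · subst hj; simpa [subC, extC] using e
          · simpa [subC, hj] using (key j hj).1
          · subst hj; rw [← hyi]; simpa [subC, extC] using e
          · simpa [subC, hj] using (key j hj).2
        rw [this]; exact hp
      · have : y = subC i q w := by
          apply Subtype.ext
          refine Prod.ext (funext fun j => ?_) (funext fun j => ?_) <;> by_cases hj : j = i
          · subst hj; simpa [subC, extC] using e
          · simpa [subC, hj] using (key j hj).1
          · subst hj; rw [← hyi]; simpa [subC, extC] using e
          · simpa [subC, hj] using (key j hj).2
        rw [this]; exact hq
    · have hiT : i ∈ T := (Finset.mem_insert.1 hi).resolve_left his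
      rw [Finset.erase_insert_of_ne (Ne.symm his)] at hU
      subst hU
      let v : Cube X (T.erase i) :=
        ⟨(Function.update y.1.1 s (w.1.1 s), Function.update y.1.2 s (w.1.2 s)), by
          intro j hj
          by_cases e : j = s
          · subst e; simp [w.2 j hs]
          · simpa [e] using y.2 j (by
              intro hc; exact hj ((Finset.mem_insert.1 hc).resolve_left e))⟩
      have hv : v ∈ cubeSel X T (T.erase i) w := by
        refine ⟨fun j hj hj' => ?_, fun j hj => ?_⟩
        · have e : j ≠ s := fun e => hs (e ▸ hj)
          have := hy.1 j (Finset.mem_insert_of_mem hj) (by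
            intro hc; exact hj' ((Finset.mem_insert.1 hc).resolve_left e))
          simpa [v, extC, e] using this
        · by_cases e : j = s
          · subst e; simp [v]
          · have := hy.2 j (by
              simp [e] at hj ⊢; exact hj)
            simpa [v, extC, e] using this
      have hyv : y = extC s p q v := by
        have hys := hy.2 s (by simp)
        apply Subtype.ext
        refine Prod.ext (funext fun j => ?_) (funext fun j => ?_) <;> by_cases hj : j = s
        · subst hj; simpa [extC] using hys.1
        · simp [extC, v, hj]
        · subst hj; simpa [extC] using hys.2
        · simp [extC, v, hj]
      rw [hyv]
      exact h i hiT v hv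

theorem ext_add (𝔄 : AddSystem X S) {T : Finset (Fin r)} {s : Fin r}
    (hT : insert s T ⊆ S) (w : Cube X T) (p q t : X s)
    (h1 : extC s p q w ∈ 𝔄.C (insert s T)) (h2 : extC s q t w ∈ 𝔄.C (insert s T))
    (h3 : extC s p t w ∈ 𝔄.C (insert s T)) :
    𝔄.F _ (extC s p q w) + 𝔄.F _ (extC s q t w) = 𝔄.F _ (extC s p t w) := by
  refine 𝔄.hAdd _ hT _ _ _ h1 h2 h3 s (Finset.mem_insert_self _ _) ?_ ?_ ?_ ?_
  · intro j hj; simp [extC, hj]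
  · simp [extC]
  · simp [extC]
  · simp [extC]

/-- Faces of accepted cubes (codimension one, after substituting). -/
theorem sub_face (𝔄 : AddSystem X S) {T : Finset (Fin r)} {s : Fin r} (hs : s ∉ T)
    (hT : T ⊆ S) {w : Cube X T} {p : X s} (hp : subC s p w ∈ 𝔄.Cacc T) {i : Fin r} (hi : i ∈ T)
    {v : Cube X (T.erase i)} (hv : v ∈ cubeSel X T (T.erase i) w) :
    subC s p v ∈ 𝔄.Cacc (T.erase i) :=
  (mem_C_iff 𝔄 hT ⟨i, hi⟩ _).1 hp.1 i hi _ rfl _ (sel_sub hs p hv)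

/-- The relation `ext p q w ∈ C`, and its accepted version, are equivalence relations. -/
theorem lemB (𝔄 : AddSystem X S) (s : Fin r) (n : ℕ) : ∀ T : Finset (Fin r), T.card = n →
    s ∉ T → insert s T ⊆ S → ∀ w : Cube X T,
    ((∀ p, subC s p w ∈ 𝔄.Cacc T → extC s p p w ∈ 𝔄.Cacc (insert s T)) ∧
     (∀ p q, extC s p q w ∈ 𝔄.C (insert s T) → extC s q p w ∈ 𝔄.C (insert s T)) ∧
     (∀ p q, extC s p q w ∈ 𝔄.Cacc (insert s T) → extC s q p w ∈ 𝔄.Cacc (insert s T)) ∧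
     (∀ p q t, extC s p q w ∈ 𝔄.C (insert s T) → extC s q t w ∈ 𝔄.C (insert s T) →
        extC s p t w ∈ 𝔄.C (insert s T)) ∧
     (∀ p q t, extC s p q w ∈ 𝔄.Cacc (insert s T) → extC s q t w ∈ 𝔄.Cacc (insert s T) →
        extC s p t w ∈ 𝔄.Cacc (insert s T))) := by
  induction n with
  | zero =>
    intro T hc hs hT w
    have hT0 : T = ∅ := Finset.card_eq_zero.1 hc
    have hno : ∀ i ∉ T, True := fun _ _ => trivial
    have A : ∀ p q, extC s p q w ∈ 𝔄.C (insert s T) ↔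
        subC s p w ∈ 𝔄.Cacc T ∧ subC s q w ∈ 𝔄.Cacc T := by
      intro p q
      rw [lemA 𝔄 hs hT]
      constructor
      · rintro ⟨a, b, _⟩; exact ⟨a, b⟩
      · rintro ⟨a, b⟩
        refine ⟨a, b, fun i hi => ?_⟩
        simp [hT0] at hi
    have refl0 : ∀ p, subC s p w ∈ 𝔄.Cacc T → extC s p p w ∈ 𝔄.Cacc (insert s T) := by
      intro p hp
      have h := (A p p).2 ⟨hp, hp⟩
      exact ⟨h, by simpa using ext_add 𝔄 hT w p p p h h h⟩
    have symC : ∀ p q, extC s p q w ∈ 𝔄.C (insert s T) → extC s q p w ∈ 𝔄.C (insert s T) :=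
      fun p q h => (A q p).2 ((A p q).1 h).symm
    have trC : ∀ p q t, extC s p q w ∈ 𝔄.C (insert s T) → extC s q t w ∈ 𝔄.C (insert s T) →
        extC s p t w ∈ 𝔄.C (insert s T) :=
      fun p q t h1 h2 => (A p t).2 ⟨((A p q).1 h1).1, ((A q t).1 h2).2⟩
    refine ⟨refl0, symC, ?_, trC, ?_⟩
    · intro p q h
      have hp := refl0 p ((A p q).1 h.1).1
      have := ext_add 𝔄 hT w p q p h.1 (symC _ _ h.1) hp.1
      exact ⟨symC _ _ h.1, by rwa [h.2, hp.2, zero_add] at this⟩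
    · intro p q t h1 h2
      have h3 := trC p q t h1.1 h2.1
      have := ext_add 𝔄 hT w p q t h1.1 h2.1 h3
      exact ⟨h3, by rw [h1.2, h2.2, zero_add] at this; exact this.symm⟩
  | succ n ih =>
    intro T hc hs hT w
    have hTS : T ⊆ S := (Finset.subset_insert _ _).trans hT
    have A : ∀ p q, _ := fun p q => lemA 𝔄 hs hT w p q
    have IH : ∀ i ∈ T, ∀ v : Cube X (T.erase i), _ := fun i hi v =>
      ih (T.erase i) (by rw [Finset.card_erase_of_mem hi, hc]; rfl)
        (fun h => hs (Finset.mem_of_mem_erase h))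
        ((Finset.insert_subset_insert _ (Finset.erase_subset _ _)).trans hT) v
    have refl0 : ∀ p, subC s p w ∈ 𝔄.Cacc T → extC s p p w ∈ 𝔄.Cacc (insert s T) := by
      intro p hp
      have h := (A p p).2 ⟨hp, hp, fun i hi v hv =>
        (IH i hi v).1 p (sub_face 𝔄 hs hTS hp hi hv)⟩
      exact ⟨h, by simpa using ext_add 𝔄 hT w p p p h h h⟩
    have symC : ∀ p q, extC s p q w ∈ 𝔄.C (insert s T) → extC s q p w ∈ 𝔄.C (insert s T) := by
      intro p q h
      obtain ⟨h1, h2, h3⟩ := (A p q).1 h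
      exact (A q p).2 ⟨h2, h1, fun i hi v hv => (IH i hi v).2.2.1 p q (h3 i hi v hv)⟩
    have trC : ∀ p q t, extC s p q w ∈ 𝔄.C (insert s T) → extC s q t w ∈ 𝔄.C (insert s T) →
        extC s p t w ∈ 𝔄.C (insert s T) := by
      intro p q t h k
      obtain ⟨h1, h2, h3⟩ := (A p q).1 h
      obtain ⟨k1, k2, k3⟩ := (A q t).1 k
      exact (A p t).2 ⟨h1, k2, fun i hi v hv =>
        (IH i hi v).2.2.2.2 p q t (h3 i hi v hv) (k3 i hi v hv)⟩
    refine ⟨refl0, symC, ?_, trC, ?_⟩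
    · intro p q h
      have hp := refl0 p ((A p q).1 h.1).1
      have := ext_add 𝔄 hT w p q p h.1 (symC _ _ h.1) hp.1
      exact ⟨symC _ _ h.1, by rwa [h.2, hp.2, zero_add] at this⟩
    · intro p q t h1 h2
      have h3 := trC p q t h1.1 h2.1
      have := ext_add 𝔄 hT w p q t h1.1 h2.1 h3
      exact ⟨h3, by rw [h1.2, h2.2, zero_add] at this; exact this.symm⟩

/-- The colour of `p` at the face `w`. -/
noncomputable def colour (𝔄 : AddSystem X S) (s : Fin r) {T : Finset (Fin r)}
    (w : Cube X T) (p : X s) : 𝔄.A (insert s T) :=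
  𝔄.F (insert s T)
    (extC s (@Classical.epsilon _ ⟨p⟩ (fun p0 => extC s p0 p w ∈ 𝔄.C (insert s T))) p w)

theorem colour_eq (𝔄 : AddSystem X S) (s : Fin r) {T : Finset (Fin r)} (hs : s ∉ T)
    (hT : insert s T ⊆ S) (w : Cube X T) (p q : X s)
    (h : extC s p q w ∈ 𝔄.C (insert s T)) (hc : colour 𝔄 s w p = colour 𝔄 s w q) :
    extC s p q w ∈ 𝔄.Cacc (insert s T) := by
  obtain ⟨h1, h2, h3, h4, h5⟩ := lemB 𝔄 s _ T rfl hs hT w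
  have e : (fun p0 => extC s p0 p w ∈ 𝔄.C (insert s T)) =
      (fun p0 => extC s p0 q w ∈ 𝔄.C (insert s T)) := by
    funext p0
    exact propext ⟨fun k => h4 _ _ _ k h, fun k => h4 _ _ _ k (h2 _ _ h)⟩
  have hp := @Classical.epsilon_spec _ (fun p0 => extC s p0 p w ∈ 𝔄.C (insert s T))
    ⟨q, h2 _ _ h⟩
  unfold colour at hc
  rw [← e] at hc
  generalize @Classical.epsilon _ ⟨p⟩ (fun p0 => extC s p0 p w ∈ 𝔄.C (insert s T)) = p0 at hp hc
  have := ext_add 𝔄 hT w p0 p q hp h (h4 _ _ _ hp h)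
  refine ⟨h, ?_⟩
  rw [← hc] at this
  simpa using this

theorem colour_main (𝔄 : AddSystem X S) (s : Fin r) (n : ℕ) : ∀ T : Finset (Fin r), T.card = n →
    s ∉ T → insert s T ⊆ S → ∀ w : Cube X T, ∀ p q : X s,
    subC s p w ∈ 𝔄.Cacc T → subC s q w ∈ 𝔄.Cacc T →
    (∀ U ⊆ T, ∀ v ∈ cubeSel X T U w, colour 𝔄 s v p = colour 𝔄 s v q) →
    extC s p q w ∈ 𝔄.Cacc (insert s T) := by
  induction n with
  | zero =>
    intro T hc hs hT w p q hp hq hcol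
    refine colour_eq 𝔄 s hs hT w p q ?_ (hcol T subset_rfl w ⟨?_, ?_⟩)
    · refine (lemA 𝔄 hs hT w p q).2 ⟨hp, hq, fun i hi => ?_⟩
      simp [Finset.card_eq_zero.1 hc] at hi
    · intro i h1 h2; exact absurd h1 h2
    · intro i _; exact ⟨rfl, rfl⟩
  | succ n ih =>
    intro T hc hs hT w p q hp hq hcol
    have hTS : T ⊆ S := (Finset.subset_insert _ _).trans hT
    refine colour_eq 𝔄 s hs hT w p q ?_ (hcol T subset_rfl w ⟨?_, ?_⟩)
    · refine (lemA 𝔄 hs hT w p q).2 ⟨hp, hq, fun i hi v hv => ?_⟩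
      refine ih (T.erase i) (by rw [Finset.card_erase_of_mem hi, hc]; rfl)
        (fun h => hs (Finset.mem_of_mem_erase h))
        ((Finset.insert_subset_insert _ (Finset.erase_subset _ _)).trans hT) v p q
        (sub_face 𝔄 hs hTS hp hi hv) (sub_face 𝔄 hs hTS hq hi hv) ?_
      intro U hU u hu
      exact hcol U (hU.trans (Finset.erase_subset _ _)) u
        (sel_trans (Finset.erase_subset _ _) hU hv hu)
    · intro i h1 h2; exact absurd h1 h2
    · intro i _; exact ⟨rfl, rfl⟩

/-- All faces of `z`. -/
abbrev Face {T : Finset (Fin r)} (z : Cube X T) : Type _ :=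
  {f : (Σ U : Finset (Fin r), Cube X U) // f.1 ⊆ T ∧ f.2 ∈ cubeSel X T f.1 z}

theorem face_card {T : Finset (Fin r)} (z : Cube X T) : Finite (Face z) ∧
    Nat.card (Face z) ≤ 3 ^ T.card := by
  let φ : Face z → (T → Fin 3) := fun f i =>
    if i.1 ∈ f.1.1 then 2 else if f.1.2.1.1 i = z.1.1 i then 0 else 1
  have hφ : Function.Injective φ := by
    rintro ⟨⟨U, u⟩, hU, hu⟩ ⟨⟨V, v⟩, hV, hv⟩ h
    dsimp only at hU hu hV hv
    have hUV : U = V := by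
      ext i
      by_cases hi : i ∈ T
      · have := congrFun h ⟨i, hi⟩
        simp only [φ] at this
        split_ifs at this <;> simp_all
      · exact ⟨fun k => absurd (hU k) hi, fun k => absurd (hV k) hi⟩
    subst hUV
    have h1 : ∀ i, u.1.1 i = v.1.1 i := by
      intro i
      by_cases hi : i ∈ T
      · by_cases hiU : i ∈ U
        · rw [(hu.2 i (by simp [hiU])).1, (hv.2 i (by simp [hiU])).1]
        · have := congrFun h ⟨i, hi⟩
          simp only [φ, hiU] at this
          have a := hu.1 i hi hiU
          have b := hv.1 i hi hiU
          by_cases e1 : u.1.1 i = z.1.1 i <;> by_cases e2 : v.1.1 i = z.1.1 i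
          · rw [e1, e2]
          · simp [e1, e2] at this
          · simp [e1, e2] at this
          · rw [a.resolve_left e1, b.resolve_left e2]
      · rw [(hu.2 i (by simp [hi])).1, (hv.2 i (by simp [hi])).1]
    have h2 : ∀ i, u.1.2 i = v.1.2 i := by
      intro i
      by_cases hiU : i ∈ U
      · rw [(hu.2 i (by simp [hiU])).2, (hv.2 i (by simp [hiU])).2]
      · rw [← u.2 i hiU, ← v.2 i hiU, h1 i]
    have : u = v := Subtype.ext (Prod.ext (funext h1) (funext h2))
    subst this
    rfl
  refine ⟨Finite.of_injective φ hφ, ?_⟩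
  have := Nat.card_le_card_of_injective φ hφ
  simpa using this

/-- A colouring with `N` colours yields many monochromatic pairs. -/
theorem pairs_count {P K : Type*} [Fintype P] [Fintype K] (Y : Finset P) (c : P → K) :
    (Y.card : ℝ) ^ 2 ≤
      Fintype.card K * (((Y ×ˢ Y).filter (fun x => c x.1 = c x.2)).card : ℝ) := by
  have h1 : Y.card = ∑ k : K, (Y.filter (fun p => c p = k)).card :=
    Finset.card_eq_sum_card_fiberwise (fun _ _ => Finset.mem_coe.2 (Finset.mem_univ _))
  have h2 : ((Y ×ˢ Y).filter (fun x => c x.1 = c x.2)).card =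
      ∑ k : K, (Y.filter (fun p => c p = k)).card ^ 2 := by
    rw [Finset.card_eq_sum_card_fiberwise (f := fun x => c x.1) (t := Finset.univ)
      (fun _ _ => Finset.mem_coe.2 (Finset.mem_univ _))]
    refine Finset.sum_congr rfl fun k _ => ?_
    rw [sq, ← Finset.card_product]
    congr 1
    ext ⟨x, y⟩
    simp only [Finset.mem_filter, Finset.mem_product]
    constructor
    · rintro ⟨⟨⟨a, b⟩, e⟩, f⟩; exact ⟨⟨a, f⟩, b, e ▸ f⟩
    · rintro ⟨⟨a, f⟩, b, g⟩; exact ⟨⟨⟨a, b⟩, f.trans g.symm⟩, f⟩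
  rw [h2]
  have := sq_sum_le_card_mul_sum_sq (s := (Finset.univ : Finset K))
    (f := fun k => ((Y.filter (fun p => c p = k)).card : ℝ))
  rw [h1]
  push_cast
  simpa using this

theorem fibre_bound [∀ i, Fintype (X i)] (𝔄 : AddSystem X S) (a : ℝ) (ha : 1 ≤ a)
    (hA : ∀ T : Finset (Fin r), T ⊆ S → (Nat.card (𝔄.A T) : ℝ) ≤ a)
    {T : Finset (Fin r)} {s : Fin r} (hs : s ∉ T) (hT : insert s T ⊆ S) (z : Cube X T) :
    ((Finset.univ.filter (fun p : X s => subC s p z ∈ 𝔄.Cacc T)).card : ℝ) ^ 2 ≤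
      a ^ (3 ^ T.card) * ((Finset.univ.filter
        (fun x : X s × X s => extC s x.1 x.2 z ∈ 𝔄.Cacc (insert s T))).card : ℝ) := by
  haveI := (face_card z).1
  letI : Fintype (Face z) := Fintype.ofFinite _
  letI : ∀ f : Face z, Fintype (𝔄.A (insert s f.1.1)) := fun f => Fintype.ofFinite _
  let c : X s → (∀ f : Face z, 𝔄.A (insert s f.1.1)) := fun p f => colour 𝔄 s f.1.2 p
  refine (pairs_count _ c).trans ?_
  have h1 : (Fintype.card (∀ f : Face z, 𝔄.A (insert s f.1.1)) : ℝ) ≤ a ^ (3 ^ T.card) := by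
    rw [Fintype.card_pi]
    push_cast
    calc ∏ f : Face z, (Fintype.card (𝔄.A (insert s f.1.1)) : ℝ) ≤ ∏ f : Face z, a := by
          refine Finset.prod_le_prod (fun _ _ => by positivity) fun f _ => ?_
          rw [← Nat.card_eq_fintype_card]
          exact hA _ ((Finset.insert_subset_insert _ f.2.1).trans hT)
      _ = a ^ (Nat.card (Face z)) := by simp [Nat.card_eq_fintype_card]
      _ ≤ _ := pow_le_pow_right₀ ha (face_card z).2
  refine mul_le_mul h1 ?_ (by positivity) (by positivity)
  norm_cast
  refine Finset.card_le_card ?_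
  rintro ⟨p, q⟩ h
  simp only [Finset.mem_filter, Finset.mem_product, Finset.mem_univ, true_and] at h ⊢
  refine colour_main 𝔄 s _ T rfl hs hT z p q h.1.1 h.1.2 ?_
  intro U hU v hv
  exact congrFun h.2 ⟨⟨U, v⟩, hU, hv⟩

noncomputable def equivSub {T : Finset (Fin r)} {s : Fin r} (hs : s ∉ T) :
    Cube X T × X s ≃ Cube X T × X s where
  toFun x := (subC s x.2 x.1, x.1.1.1 s)
  invFun x := (subC s x.2 x.1, x.1.1.1 s)
  left_inv := by
    rintro ⟨z, p⟩
    have := z.2 s hs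
    refine Prod.ext (Subtype.ext (Prod.ext ?_ ?_)) ?_
    · simp [subC]
    · simp [subC, this]
    · simp [subC]
  right_inv := by
    rintro ⟨z, p⟩
    have := z.2 s hs
    refine Prod.ext (Subtype.ext (Prod.ext ?_ ?_)) ?_
    · simp [subC]
    · simp [subC, this]
    · simp [subC]

noncomputable def equivExt {T : Finset (Fin r)} {s : Fin r} (hs : s ∉ T) :
    Cube X T × (X s × X s) ≃ Cube X (insert s T) × X s where
  toFun x := (extC s x.2.1 x.2.2 x.1, x.1.1.1 s)
  invFun x := (⟨(Function.update x.1.1.1 s x.2, Function.update x.1.1.2 s x.2), by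
    intro i hi
    by_cases e : i = s
    · subst e; simp
    · simpa [e] using x.1.2 i (by simp [e, hi])⟩, (x.1.1.1 s, x.1.1.2 s))
  left_inv := by
    rintro ⟨z, p⟩
    have := z.2 s hs
    refine Prod.ext (Subtype.ext (Prod.ext ?_ ?_)) ?_
    · simp [extC]
    · simp [extC, this]
    · simp [extC]
  right_inv := by
    rintro ⟨z, p⟩
    refine Prod.ext (Subtype.ext (Prod.ext ?_ ?_)) ?_
    · simp [extC]
    · simp [extC]
    · simp [extC]

theorem double_count {α β γ δ' : Type*} [Fintype α] [Fintype β] [Fintype γ] [Fintype δ']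
    (e : α × β ≃ γ × δ') (R : α → β → Prop) (Q : Set γ)
    (h : ∀ x y, R x y ↔ (e (x, y)).1 ∈ Q) :
    ∑ x : α, (Finset.univ.filter (fun y => R x y)).card = Q.ncard * Fintype.card δ' := by
  have h1 : ∑ x : α, (Finset.univ.filter (fun y => R x y)).card =
      (Finset.univ.filter (fun x : α × β => R x.1 x.2)).card := by
    simp only [Finset.card_filter, Fintype.sum_prod_type]
  have h2 : (Finset.univ.filter (fun x : α × β => R x.1 x.2)).card =
      ((Finset.univ.filter (fun y : γ => y ∈ Q)) ×ˢ (Finset.univ : Finset δ')).card := by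
    refine Finset.card_equiv e ?_
    rintro ⟨x, y⟩
    simp [h]
  rw [h1, h2, Finset.card_product, Set.ncard_eq_toFinset_card']
  congr 2
  ext; simp

theorem step [∀ i, Fintype (X i)] [∀ i, Nonempty (X i)] (𝔄 : AddSystem X S) (a : ℝ) (ha : 1 ≤ a)
    (hA : ∀ T : Finset (Fin r), T ⊆ S → (Nat.card (𝔄.A T) : ℝ) ≤ a)
    {T : Finset (Fin r)} {s : Fin r} (hs : s ∉ T) (hT : insert s T ⊆ S) :
    (((𝔄.Cacc T).ncard : ℝ) / (Nat.card (Cube X T) : ℝ)) ^ 2 ≤ a ^ (3 ^ T.card) *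
      (((𝔄.Cacc (insert s T)).ncard : ℝ) / (Nat.card (Cube X (insert s T)) : ℝ)) := by
  have h1 := double_count (equivSub (X := X) hs) (fun z p => subC s p z ∈ 𝔄.Cacc T) (𝔄.Cacc T)
    (fun x y => Iff.rfl)
  have h2 := double_count (equivExt (X := X) hs)
    (fun z p => extC s p.1 p.2 z ∈ 𝔄.Cacc (insert s T)) (𝔄.Cacc (insert s T))
    (fun x y => Iff.rfl)
  have h3 := Fintype.card_congr (equivExt (X := X) hs)
  have hm : 0 < Fintype.card (X s) := Fintype.card_pos
  simp only [Fintype.card_prod] at h3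
  have h4 : Fintype.card (Cube X (insert s T)) = Fintype.card (Cube X T) * Fintype.card (X s) := by
    apply Nat.eq_of_mul_eq_mul_right hm
    rw [← h3, mul_assoc]
  haveI : Nonempty (Cube X T) := ⟨⟨(fun i => Classical.arbitrary _, fun i => Classical.arbitrary _),
    fun _ _ => rfl⟩⟩
  have hN : 0 < Fintype.card (Cube X T) := Fintype.card_pos
  have h5 := sq_sum_le_card_mul_sum_sq (s := (Finset.univ : Finset (Cube X T)))
    (f := fun z => ((Finset.univ.filter (fun p : X s => subC s p z ∈ 𝔄.Cacc T)).card : ℝ))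
  have h6 := Finset.sum_le_sum (s := (Finset.univ : Finset (Cube X T)))
    (fun z _ => fibre_bound 𝔄 a ha hA hs hT z)
  rw [← Finset.mul_sum] at h6
  have h1' := congrArg (Nat.cast (R := ℝ)) h1
  have h2' := congrArg (Nat.cast (R := ℝ)) h2
  push_cast at h1' h2'
  rw [h1'] at h5
  rw [h2'] at h6
  rw [Nat.card_eq_fintype_card, Nat.card_eq_fintype_card, h4]
  rw [Finset.card_univ] at h5
  push_cast
  generalize ((𝔄.Cacc T).ncard : ℝ) = u at *
  generalize ((𝔄.Cacc (insert s T)).ncard : ℝ) = v at *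
  have hm' : (0 : ℝ) < Fintype.card (X s) := by exact_mod_cast hm
  have hN' : (0 : ℝ) < Fintype.card (Cube X T) := by exact_mod_cast hN
  generalize (Fintype.card (X s) : ℝ) = m at *
  generalize (Fintype.card (Cube X T) : ℝ) = N at *
  generalize a ^ (3 ^ T.card) = b at *
  have h7 : (u * m) ^ 2 ≤ N * (b * (v * m)) :=
    h5.trans (mul_le_mul_of_nonneg_left h6 hN'.le)
  have h8 : u ^ 2 * m ≤ N * b * v := by
    apply le_of_mul_le_mul_right _ hm'
    nlinarith
  rw [div_pow, ← mul_div_assoc, div_le_div_iff₀ (by positivity) (by positivity)]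
  nlinarith

theorem main_ind [∀ i, Fintype (X i)] [∀ i, Nonempty (X i)] (𝔄 : AddSystem X S) (a : ℝ)
    (ha : 1 ≤ a)
    (hA : ∀ T : Finset (Fin r), T ⊆ S → (Nat.card (𝔄.A T) : ℝ) ≤ a)
    (δ : ℝ) (hδ : δ = ((𝔄.Cacc ∅).ncard : ℝ) / (Nat.card ((i : Fin r) → X i) : ℝ))
    (T : Finset (Fin r)) : T ⊆ S →
    δ ^ (2 ^ T.card) * ((a ^ (3 ^ T.card))⁻¹) ≤
      ((𝔄.Cacc T).ncard : ℝ) / (Nat.card (Cube X T) : ℝ) := by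
  have hδ0 : 0 ≤ δ := by rw [hδ]; positivity
  have ha0 : 0 < a := by linarith
  induction T using Finset.induction_on with
  | empty =>
    intro _
    have e : Cube X ∅ ≃ ((i : Fin r) → X i) :=
      { toFun := fun x => x.1.1
        invFun := fun x => ⟨(x, x), fun _ _ => rfl⟩
        left_inv := fun x => Subtype.ext (Prod.ext rfl (funext fun i => x.2 i (by simp)))
        right_inv := fun x => rfl }
    rw [Nat.card_congr e, ← hδ]
    simp only [Finset.card_empty, pow_zero, pow_one]
    exact mul_le_of_le_one_right hδ0 (inv_le_one_of_one_le₀ ha)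
  | insert s T hs ih =>
    intro hT
    have h := ih ((Finset.subset_insert _ _).trans hT)
    have h' := step 𝔄 a ha hA hs hT
    rw [Finset.card_insert_of_notMem hs]
    have hb : 0 < a ^ (3 ^ T.card) := by positivity
    have hsq := (pow_le_pow_left₀ (by positivity) h 2).trans h'
    have e1 : δ ^ 2 ^ (T.card + 1) = (δ ^ 2 ^ T.card) ^ 2 := by rw [← pow_mul, pow_succ]
    have e2 : a ^ 3 ^ (T.card + 1) = (a ^ 3 ^ T.card) ^ 3 := by rw [← pow_mul, pow_succ]
    rw [e1, e2]
    rw [← div_le_iff₀' hb] at hsq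
    refine le_trans (le_of_eq ?_) hsq
    field_simp

end helpers

/-- Density propagation for additive systems:
`|C_S^acc|/|Cube(X,S)| ≥ δ^{2^{|S|}} a^{−3^{|S|}}` where `δ = |C_∅^acc|/|X|`. -/
theorem addSystem_density {r : ℕ} (X : Fin r → Type*) [∀ i, Fintype (X i)]
    [∀ i, Nonempty (X i)] (S : Finset (Fin r)) (𝔄 : AddSystem X S)
    (a : ℝ) (ha : 1 ≤ a) (hA : ∀ T : Finset (Fin r), T ⊆ S → (Nat.card (𝔄.A T) : ℝ) ≤ a)
    (δ : ℝ) (hδ : δ = ((𝔄.Cacc ∅).ncard : ℝ) / (Nat.card ((i : Fin r) → X i) : ℝ)) :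
    δ ^ (2 ^ S.card) * ((a ^ (3 ^ S.card))⁻¹) ≤
      ((𝔄.Cacc S).ncard : ℝ) / (Nat.card (Cube X S) : ℝ) := by
  exact main_ind 𝔄 a ha hA δ hδ S subset_rfl
end

section
/- Let r ≥ 2 and let X₁, …, X_r be nonempty finite sets with product X. Suppose Y ⊆ X has |Y| ≥ δ·|X| for some real δ with 0 < δ < 2^{−r−1}, and let b ≥ 1 be an integer satisfying b ≤ (log(min_{i∈[r]} |X_i|) / (5·log(δ^{−1})))^{1/(r−1)}. Then there exist subsets Z_i ⊆ X_i with |Z_i| = b for all i ∈ [r] such that Z₁ × ⋯ × Z_r ⊆ Y. -/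
universe u

lemma fb_step {A C : Type*} [Finite A] [Finite C] (R : A → C → Prop) (b : ℕ) (hb : 1 ≤ b)
    (δ : ℝ) (hδ : 0 ≤ δ)
    (h : δ * Nat.card A * Nat.card C ≤ Nat.card {p : A × C // R p.1 p.2}) :
    δ ^ b * (Nat.card A : ℝ) ^ b * Nat.card C ≤
      Nat.card {p : (Fin b → A) × C // ∀ j, R (p.1 j) p.2} := by
  classical
  have := Fintype.ofFinite A
  have := Fintype.ofFinite C
  have e1 : Nat.card {p : A × C // R p.1 p.2} = ∑ c : C, Nat.card {a : A // R a c} := by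
    rw [← Nat.card_sigma]
    refine Nat.card_congr ⟨fun p => ⟨p.1.2, p.1.1, p.2⟩, fun q => ⟨(q.2.1, q.1), q.2.2⟩, ?_, ?_⟩
    · intro p; rfl
    · intro q; rfl
  have e2 : Nat.card {p : (Fin b → A) × C // ∀ j, R (p.1 j) p.2}
      = ∑ c : C, Nat.card {a : A // R a c} ^ b := by
    have : ∀ c : C, Nat.card {a : A // R a c} ^ b = Nat.card (Fin b → {a : A // R a c}) := by
      intro c; rw [Nat.card_fun]; simp
    simp_rw [this]
    rw [← Nat.card_sigma]
    refine Nat.card_congr ⟨fun p => ⟨p.1.2, fun j => ⟨p.1.1 j, p.2 j⟩⟩,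
      fun q => ⟨(fun j => (q.2 j).1, q.1), fun j => (q.2 j).2⟩, ?_, ?_⟩
    · intro p; rfl
    · intro q; rfl
  rw [e1] at h
  rw [e2]
  obtain ⟨m, rfl⟩ : ∃ m, b = m + 1 := ⟨b - 1, by omega⟩
  push_cast at h ⊢
  rcases isEmpty_or_nonempty C with hC | hC
  · simp
  have hc : (0 : ℝ) < Nat.card C := by exact_mod_cast Nat.card_pos
  have key := pow_sum_div_card_le_sum_pow (s := (Finset.univ : Finset C))
    (f := fun c => (Nat.card {a : A // R a c} : ℝ)) (fun _ _ => by positivity) m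
  refine le_trans ?_ key
  rw [Finset.card_univ, ← Nat.card_eq_fintype_card, le_div_iff₀ (by positivity)]
  calc _ = (δ * Nat.card A * Nat.card C) ^ (m + 1) := by ring
    _ ≤ _ := by gcongr

lemma fb_hom (b : ℕ) (hb : 1 ≤ b) : ∀ (k : ℕ) (X : Fin k → Type u) [∀ i, Finite (X i)]
    (W : Type u) [Finite W] (Y : (∀ i, X i) → W → Prop) (δ : ℝ) (_ : 0 ≤ δ)
    (_ : δ * (∏ i, (Nat.card (X i) : ℝ)) * Nat.card W ≤
      Nat.card {p : (∀ i, X i) × W // Y p.1 p.2}),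
    δ ^ (b ^ k) * (∏ i, (Nat.card (X i) : ℝ)) ^ b * Nat.card W ≤
      Nat.card {p : (∀ i, Fin b → X i) × W //
        ∀ s : Fin k → Fin b, Y (fun i => p.1 i (s i)) p.2} := by
  intro k
  induction k with
  | zero =>
    intro X _ W _ Y δ hδ h
    simp only [Finset.univ_eq_empty, Finset.prod_empty, pow_zero, pow_one, one_pow] at h ⊢
    refine h.trans (le_of_eq ?_)
    congr 1
    refine Nat.card_congr ⟨fun p => ⟨(fun i => i.elim0, p.1.2), fun s => ?_⟩,
      fun q => ⟨(fun i => i.elim0, q.1.2), ?_⟩, ?_, ?_⟩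
    · convert p.2
    · convert q.2 (fun i => i.elim0)
    · intro p; ext i
      · exact i.elim0
      · rfl
    · intro p; ext i
      · exact i.elim0
      · rfl
  | succ k ih =>
    intro X _ W _ Y δ hδ h
    have h1 := fb_step (A := X 0) (C := (∀ i : Fin k, X i.succ) × W)
      (fun a c => Y (Fin.cons a c.1) c.2) b hb δ hδ (by
        rw [Fin.prod_univ_succ] at h
        rw [Nat.card_prod, Nat.card_pi]
        push_cast
        refine le_trans (le_of_eq (by ring)) (h.trans (le_of_eq ?_))
        congr 1
        refine Nat.card_congr ⟨fun p => ⟨(p.1.1 0, (fun i => p.1.1 i.succ, p.1.2)), ?_⟩,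
          fun q => ⟨(Fin.cons q.1.1 q.1.2.1, q.1.2.2), q.2⟩, ?_, ?_⟩
        · convert p.2 using 1
          exact Fin.cons_self_tail p.1.1
        · intro p
          apply Subtype.ext
          exact Prod.ext (Fin.cons_self_tail p.1.1) rfl
        · intro q; rfl)
    have h2 := ih (fun i => X i.succ) ((Fin b → X 0) × W)
      (fun x c => ∀ j, Y (Fin.cons (c.1 j) x) c.2) (δ ^ b) (by positivity) (by
        rw [Nat.card_prod, Nat.card_fun]
        rw [Nat.card_prod, Nat.card_pi] at h1
        push_cast at h1 ⊢
        simp only [Nat.card_eq_fintype_card (α := Fin b), Fintype.card_fin]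
        refine le_trans (le_of_eq (by ring)) (h1.trans (le_of_eq ?_))
        congr 1
        refine Nat.card_congr ⟨fun p => ⟨(p.1.2.1, (p.1.1, p.1.2.2)), p.2⟩,
          fun q => ⟨(q.1.2.1, (q.1.1, q.1.2.2)), q.2⟩, ?_, ?_⟩
        · intro p; rfl
        · intro q; rfl)
    rw [Nat.card_prod, Nat.card_fun] at h2
    push_cast at h2
    simp only [Nat.card_eq_fintype_card (α := Fin b), Fintype.card_fin] at h2
    rw [Fin.prod_univ_succ, pow_succ', pow_mul, mul_pow]
    refine le_trans (le_of_eq (by ring)) (h2.trans (le_of_eq ?_))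
    congr 1
    refine Nat.card_congr ⟨fun p => ⟨(Fin.cons p.1.2.1 p.1.1, p.1.2.2), ?_⟩,
      fun q => ⟨(fun i => q.1.1 i.succ, (q.1.1 0, q.1.2)), ?_⟩, ?_, ?_⟩
    · intro s
      convert p.2 (fun i => s i.succ) (s 0) using 1
      funext i
      refine Fin.cases ?_ (fun i => ?_) i <;> rfl
    · intro s j
      convert q.2 (Fin.cons j s) using 1
      funext i
      refine Fin.cases ?_ (fun i => ?_) i <;> rfl
    · intro p; rfl
    · intro q
      apply Subtype.ext
      exact Prod.ext (Fin.cons_self_tail q.1.1) rfl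

lemma fb_bad (b k : ℕ) (X : Fin k → Type u) [∀ i, Finite (X i)] (n : ℝ) (hn0 : 0 ≤ n)
    (hn : ∀ i, n ≤ Nat.card (X i)) :
    (Nat.card {t : ∀ i, Fin b → X i // ∃ i, ¬ Function.Injective (t i)} : ℝ) * n ≤
      k * b ^ 2 * (∏ i, (Nat.card (X i) : ℝ)) ^ b := by
  classical
  have := fun i => Fintype.ofFinite (X i)
  have hP : (∏ i, (Nat.card (X i) : ℝ)) ^ b = Nat.card (∀ i, Fin b → X i) := by
    rw [Nat.card_pi]
    simp [Nat.card_fun, Finset.prod_pow]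
  have h1 : ∀ (i : Fin k) (j j' : Fin b), j ≠ j' →
      (Nat.card {t : ∀ i, Fin b → X i // t i j = t i j'} : ℝ) * n ≤
        Nat.card (∀ i, Fin b → X i) := by
    intro i j j' hj
    refine (mul_le_mul_of_nonneg_left (hn i) (by positivity)).trans ?_
    rw [← Nat.cast_mul, ← Nat.card_prod]
    norm_cast
    apply Nat.card_le_card_of_injective
      (fun p : {t : ∀ i, Fin b → X i // t i j = t i j'} × X i =>
        Function.update p.1.1 i (Function.update (p.1.1 i) j p.2))
    rintro ⟨⟨t, ht⟩, x⟩ ⟨⟨t', ht'⟩, x'⟩ h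
    simp only at h
    have hi := congrFun h i
    simp only [Function.update_self] at hi
    have hx : x = x' := by simpa using congrFun hi j
    have hjj : ∀ l, l ≠ j → t i l = t' i l := by
      intro l hl
      simpa [hl] using congrFun hi l
    have htt : t = t' := by
      funext i' l
      by_cases hi' : i' = i
      · subst hi'
        by_cases hl : l = j
        · subst hl; rw [ht, ht']; exact hjj _ (Ne.symm hj)
        · exact hjj l hl
      · have := congrFun h i'
        simp only [Function.update_of_ne hi'] at this
        rw [this]
    subst htt; subst hx; rfl
  have h2 : Nat.card {t : ∀ i, Fin b → X i // ∃ i, ¬ Function.Injective (t i)} ≤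
      ∑ q : Fin k × Fin b × Fin b,
        if q.2.1 ≠ q.2.2 then Nat.card {t : ∀ i, Fin b → X i // t q.1 q.2.1 = t q.1 q.2.2}
        else 0 := by
    simp only [Nat.card_eq_fintype_card, Fintype.card_subtype]
    have hsub : (Finset.univ.filter fun t : ∀ i, Fin b → X i => ∃ i, ¬ Function.Injective (t i)) ⊆
      (Finset.univ : Finset (Fin k × Fin b × Fin b)).biUnion fun q =>
        if q.2.1 ≠ q.2.2 then
          (Finset.univ.filter fun t : ∀ i, Fin b → X i => t q.1 q.2.1 = t q.1 q.2.2)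
        else ∅ := by
      intro t ht
      simp only [Finset.mem_filter, Finset.mem_univ, true_and] at ht
      obtain ⟨i, hi⟩ := ht
      simp only [Function.Injective, not_forall] at hi
      obtain ⟨j, j', he, hne⟩ := hi
      rw [Finset.mem_biUnion]
      refine ⟨(i, j, j'), Finset.mem_univ _, ?_⟩
      simp [hne, he]
    refine (Finset.card_le_card hsub).trans (Finset.card_biUnion_le.trans ?_)
    apply Finset.sum_le_sum
    intro q _
    split_ifs <;> simp
  rw [hP]
  calc _ ≤ ((∑ q : Fin k × Fin b × Fin b,
        if q.2.1 ≠ q.2.2 then Nat.card {t : ∀ i, Fin b → X i // t q.1 q.2.1 = t q.1 q.2.2}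
        else 0 : ℕ) : ℝ) * n := by gcongr
    _ = ∑ q : Fin k × Fin b × Fin b, ((
        if q.2.1 ≠ q.2.2 then Nat.card {t : ∀ i, Fin b → X i // t q.1 q.2.1 = t q.1 q.2.2}
        else 0 : ℕ) : ℝ) * n := by push_cast; rw [Finset.sum_mul]
    _ ≤ ∑ q : Fin k × Fin b × Fin b, (Nat.card (∀ i, Fin b → X i) : ℝ) := by
        apply Finset.sum_le_sum
        intro q _
        split_ifs with hq
        · exact h1 _ _ _ hq
        · rw [Nat.cast_zero, zero_mul]; exact Nat.cast_nonneg _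
    _ = _ := by
        rw [Finset.sum_const, Finset.card_univ, Fintype.card_prod, Fintype.card_prod,
          Fintype.card_fin, Fintype.card_fin, nsmul_eq_mul]
        push_cast
        ring

lemma fb_num (k b : ℕ) (hk : 1 ≤ k) (hb : 1 ≤ b) (δ : ℝ) (hδ0 : 0 < δ)
    (hδ1 : δ < 2 ^ (-((k + 1 : ℕ) : ℝ) - 1)) (n : ℝ) (hn1 : 1 ≤ n)
    (h : (b : ℝ) ≤ (Real.log n / (5 * Real.log δ⁻¹)) ^ ((1 : ℝ) / (((k + 1 : ℕ) : ℝ) - 1))) :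
    (b : ℝ) + k * b ^ 2 < n * δ ^ (b ^ k) := by
  have hd : (2 : ℝ) ^ (k + 2) < δ⁻¹ := by
    rw [lt_inv_comm₀ (by positivity) hδ0]
    refine hδ1.trans_le (le_of_eq ?_)
    rw [← Real.rpow_natCast, ← Real.rpow_neg (by norm_num)]
    congr 1; push_cast; ring
  have hd1 : 1 < δ⁻¹ := lt_of_le_of_lt (one_le_pow₀ (by norm_num)) hd
  have hL : 0 < Real.log δ⁻¹ := Real.log_pos hd1
  have hq : 0 ≤ Real.log n / (5 * Real.log δ⁻¹) := div_nonneg (Real.log_nonneg hn1) (by positivity)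
  have hk0 : (k : ℝ) ≠ 0 := by positivity
  have h3 : (b : ℝ) ^ k ≤ Real.log n / (5 * Real.log δ⁻¹) := by
    have := pow_le_pow_left₀ (by positivity) h k
    rw [← Real.rpow_natCast _ k, ← Real.rpow_natCast _ k, ← Real.rpow_mul hq] at this
    rw [← Real.rpow_natCast _ k]
    refine this.trans (le_of_eq ?_)
    have : (1 : ℝ) / (((k + 1 : ℕ) : ℝ) - 1) * k = 1 := by
      push_cast; rw [add_sub_cancel_right, one_div, inv_mul_cancel₀ hk0]
    rw [this, Real.rpow_one]
  rw [le_div_iff₀ (by positivity)] at h3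
  have h4 : (δ⁻¹) ^ (5 * b ^ k) ≤ n := by
    rw [← Real.log_le_log_iff (by positivity) (by positivity), Real.log_pow]
    push_cast
    linarith
  have h5 : (δ⁻¹) ^ (4 * b ^ k) ≤ n * δ ^ (b ^ k) := by
    calc (δ⁻¹) ^ (4 * b ^ k) = (δ⁻¹) ^ (5 * b ^ k) * δ ^ (b ^ k) := by
          rw [show 5 * b ^ k = 4 * b ^ k + b ^ k by ring, pow_add, mul_assoc, ← mul_pow,
            inv_mul_cancel₀ hδ0.ne', one_pow, mul_one]
      _ ≤ _ := by gcongr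
  refine lt_of_lt_of_le ?_ h5
  have hbk : b ≤ b ^ k := Nat.le_self_pow (by omega) b
  calc (b : ℝ) + k * b ^ 2 ≤ (k + 1) * b ^ 2 := by
        have : (1 : ℝ) ≤ b := by exact_mod_cast hb
        nlinarith
    _ < 2 ^ (k + 1) * (2 ^ b) ^ 2 := by
        have a1 : ((k + 1 : ℕ) : ℝ) < 2 ^ (k + 1) := by exact_mod_cast Nat.lt_two_pow_self
        have a2 : (b : ℝ) < 2 ^ b := by exact_mod_cast Nat.lt_two_pow_self
        push_cast at a1
        have a3 : (b : ℝ) ^ 2 ≤ (2 ^ b) ^ 2 := by gcongr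
        have a4 : (0 : ℝ) < (2 ^ b) ^ 2 := by positivity
        nlinarith
    _ = 2 ^ (k + 1 + 2 * b) := by rw [pow_add]; congr 1; rw [← pow_mul]; ring
    _ ≤ 2 ^ ((k + 2) * (4 * b ^ k)) := by
        apply pow_le_pow_right₀ (by norm_num)
        nlinarith
    _ = (2 ^ (k + 2)) ^ (4 * b ^ k) := by rw [pow_mul]
    _ ≤ _ := by gcongr

lemma fb_arith (d Q w n D β K : ℝ) (hQ : 0 < Q) (hn : 0 < n) (hw : n ≤ w) (hβ : 0 ≤ β)
    (h1 : d * Q * w ≤ Q * β + D * w) (h2 : D * n ≤ K * Q) : β + K ≥ n * d := by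
  have hw0 : 0 < w := hn.trans_le hw
  have f1 := mul_le_mul_of_nonneg_right h1 hn.le
  have g1 : Q * β * n ≤ Q * β * w := mul_le_mul_of_nonneg_left hw (by positivity)
  have g2 := mul_le_mul_of_nonneg_right h2 hw0.le
  have f3 : (Q * w) * (n * d) ≤ (Q * w) * (β + K) := by linarith
  exact le_of_mul_le_mul_left f3 (by positivity)

lemma fb_main (b k : ℕ) (hb : 1 ≤ b) (X : Fin (k + 1) → Type u) [∀ i, Finite (X i)]
    [∀ i, Nonempty (X i)]
    (Y : Set (∀ i, X i)) (δ n : ℝ) (hδ : 0 ≤ δ) (hn0 : 0 < n) (hn : ∀ i, n ≤ Nat.card (X i))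
    (hY : δ * (Nat.card (∀ i, X i) : ℝ) ≤ (Y.ncard : ℝ))
    (hnum : (b : ℝ) + k * b ^ 2 < n * δ ^ (b ^ k)) :
    ∃ Z : (i : Fin (k + 1)) → Finset (X i), (∀ i, (Z i).card = b) ∧
      ∀ x : (i : Fin (k + 1)) → X i, (∀ i, x i ∈ Z i) → x ∈ Y := by
  classical
  have := fun i => Fintype.ofFinite (X i)
  have h1 := fb_hom b hb k (fun i => X i.succ) (X 0) (fun x w => Fin.cons w x ∈ Y) δ hδ (by
    rw [Nat.card_pi, Fin.prod_univ_succ] at hY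
    push_cast at hY
    refine le_trans (le_of_eq (by ring)) (hY.trans (le_of_eq ?_))
    rw [← Nat.card_coe_set_eq]
    congr 1
    refine Nat.card_congr ⟨fun p => ⟨(fun i => p.1 i.succ, p.1 0), ?_⟩,
      fun q => ⟨Fin.cons q.1.2 q.1.1, q.2⟩, ?_, ?_⟩
    · convert p.2 using 1
      exact Fin.cons_self_tail p.1
    · intro p
      apply Subtype.ext
      exact Fin.cons_self_tail p.1
    · intro q; rfl)
  have h2 := fb_bad b k (fun i => X i.succ) n hn0.le (fun i => hn _)
  set P : ℝ := ∏ i : Fin k, (Nat.card (X i.succ) : ℝ) with hP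
  have hPc : P ^ b = Nat.card (∀ i : Fin k, Fin b → X i.succ) := by
    rw [Nat.card_pi]
    simp [hP, Nat.card_fun, Finset.prod_pow]
  have hP0 : 0 < P ^ b := by rw [hPc]; exact_mod_cast Nat.card_pos
  let N : (∀ i : Fin k, Fin b → X i.succ) → Finset (X 0) := fun t =>
    Finset.univ.filter fun w => ∀ s : Fin k → Fin b, (Fin.cons w (fun i => t i (s i)) : ∀ i, X i) ∈ Y
  by_cases hex : ∃ t, (∀ i, Function.Injective (t i)) ∧ b ≤ (N t).card
  · obtain ⟨t, ht, hbt⟩ := hex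
    obtain ⟨Z0, hZ0, hc⟩ := Finset.exists_subset_card_eq hbt
    refine ⟨Fin.cons Z0 (fun i => Finset.univ.image (t i)), ?_, ?_⟩
    · intro i
      refine Fin.cases ?_ (fun i => ?_) i
      · exact hc
      · simp [Finset.card_image_of_injective _ (ht i)]
    · intro x hx
      have hx0 : x 0 ∈ N t := hZ0 (hx 0)
      have hxs : ∀ i : Fin k, ∃ j, t i j = x i.succ := by
        intro i
        simpa using hx i.succ
      choose s hs using hxs
      have := (Finset.mem_filter.1 hx0).2 s
      convert this using 1
      funext i
      refine Fin.cases ?_ (fun i => ?_) i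
      · rfl
      · exact (hs i).symm
  · exfalso
    push Not at hex
    have e : Nat.card {p : (∀ i : Fin k, Fin b → X i.succ) × X 0 //
        ∀ s : Fin k → Fin b, (Fin.cons p.2 (fun i => p.1 i (s i)) : ∀ i, X i) ∈ Y} =
        ∑ t, (N t).card := by
      have : ∀ t, (N t).card = Nat.card {w // ∀ s : Fin k → Fin b,
          (Fin.cons w (fun i => t i (s i)) : ∀ i, X i) ∈ Y} := by
        intro t
        rw [Nat.card_eq_fintype_card, Fintype.card_subtype]
      simp_rw [this]
      rw [← Nat.card_sigma]
      refine Nat.card_congr ⟨fun p => ⟨p.1.1, p.1.2, p.2⟩, fun q => ⟨(q.1, q.2.1), q.2.2⟩, ?_, ?_⟩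
      · intro p; rfl
      · intro q; rfl
    have e2 : ∑ t, (N t).card ≤ Nat.card (∀ i : Fin k, Fin b → X i.succ) * b +
        Nat.card {t : ∀ i : Fin k, Fin b → X i.succ // ∃ i, ¬ Function.Injective (t i)} *
          Nat.card (X 0) := by
      calc ∑ t, (N t).card ≤ ∑ t : (∀ i : Fin k, Fin b → X i.succ), (b +
            if ∃ i, ¬ Function.Injective (t i) then Nat.card (X 0) else 0) := by
            apply Finset.sum_le_sum
            intro t _
            split_ifs with h
            · have : (N t).card ≤ Nat.card (X 0) := by
                rw [Nat.card_eq_fintype_card]; exact Finset.card_le_univ _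
              omega
            · push Not at h
              exact (hex t h).le
        _ = _ := by
            rw [Finset.sum_add_distrib, ← Finset.sum_filter, Finset.sum_const, Finset.sum_const]
            simp only [Nat.card_eq_fintype_card, Fintype.card_subtype, smul_eq_mul,
              Finset.card_univ]
    rw [e] at h1
    have e3 : ((∑ t, (N t).card : ℕ) : ℝ) ≤ P ^ b * b +
        Nat.card {t : ∀ i : Fin k, Fin b → X i.succ // ∃ i, ¬ Function.Injective (t i)} *
          Nat.card (X 0) := by rw [hPc]; exact_mod_cast e2
    have e4 := h1.trans e3
    exact absurd (fb_arith _ _ _ _ _ _ _ hP0 hn0 (hn 0) (Nat.cast_nonneg b) e4 h2) (not_le.2 hnum)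

/-- Smith's Ramsey-type lemma: a subset `Y` of a product `X = ∏ᵢ Xᵢ` of density `≥ δ`
contains a combinatorial box `Z₁ × ⋯ × Z_r` with `|Zᵢ| = b`, provided
`b ≤ (log(minᵢ |Xᵢ|)/(5 log δ⁻¹))^{1/(r−1)}`. -/
theorem find_box {r : ℕ} (hr : 2 ≤ r) (X : Fin r → Type*) [∀ i, Fintype (X i)]
    [∀ i, Nonempty (X i)] (Y : Set ((i : Fin r) → X i)) (δ : ℝ) (hδ0 : 0 < δ)
    (hδ1 : δ < 2 ^ (-(r : ℝ) - 1))
    (hY : δ * (Nat.card ((i : Fin r) → X i) : ℝ) ≤ (Y.ncard : ℝ))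
    (b : ℕ) (hb1 : 1 ≤ b)
    (hb : (b : ℝ) ≤ (Real.log (⨅ i : Fin r, (Fintype.card (X i) : ℝ)) /
      (5 * Real.log δ⁻¹)) ^ ((1 : ℝ) / ((r : ℝ) - 1))) :
    ∃ Z : (i : Fin r) → Finset (X i), (∀ i, (Z i).card = b) ∧
      ∀ x : (i : Fin r) → X i, (∀ i, x i ∈ Z i) → x ∈ Y := by
  obtain ⟨k, rfl⟩ : ∃ k, r = k + 1 := ⟨r - 1, by omega⟩
  have hn1 : 1 ≤ ⨅ i : Fin (k + 1), (Fintype.card (X i) : ℝ) := by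
    apply le_ciInf
    intro i
    exact_mod_cast Fintype.card_pos
  refine fb_main b k hb1 X Y δ (⨅ i : Fin (k + 1), (Fintype.card (X i) : ℝ)) hδ0.le
    (by linarith) (fun i => ?_) hY (fb_num k b (by omega) hb1 δ hδ0 hδ1 _ hn1 hb)
  rw [Nat.card_eq_fintype_card]
  exact ciInf_le (Set.finite_range _).bddBelow i
end
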